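/- arXiv:1611.09338 — 3 statements merged into one kernel-verified Lean document; each statement's English description precedes it below -/
import Mathlib

section
/- For logarithmic averages: let s ≥ 1 and let a : ℕ → ℂ be bounded by 1 and admit correlations for logarithmic averages on a sequence of intervals I = (I_N) with |I_N| → ∞. Then ‖a‖_{U^s_{*,log}(I)} ≤ 4·‖a‖_{U^s_{log}(I)}. -/
open Filter Finset Topology

/-- Gowers uniformity norm `U^s(ℤ_L)` of the `L`-periodic sequence `n ↦ a (n % L)`. -/
noncomputable def gowersNorm (L : ℕ) : ℕ → (ℕ → ℂ) → ℝ
  | 0, _ => 0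
  | 1, a => ‖(L : ℂ)⁻¹ * ∑ m ∈ Finset.range L, a (m % L)‖
  | (s + 2), a =>
      ((L : ℝ)⁻¹ * ∑ h ∈ Finset.range L,
        gowersNorm L (s + 1)
          (fun n => a ((n + h) % L) * (starRingEnd ℂ) (a (n % L))) ^ (2 ^ (s + 1)))
        ^ (((2 : ℝ) ^ (s + 2))⁻¹)

/-- The sequence `a · 1_{[H]}` placed on residues `0,…,H-1`. -/
noncomputable def truncSeq (a : ℕ → ℂ) (H : ℕ) : ℕ → ℂ := fun n => if n < H then a (n + 1) else 0

/-- `‖a‖_{U^s[H]} = ‖a·1_{[H]}‖_{U^s(ℤ_{2H})} / ‖1_{[H]}‖_{U^s(ℤ_{2H})}`. -/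
noncomputable def UsShort (s H : ℕ) (a : ℕ → ℂ) : ℝ :=
  gowersNorm (2 * H) s (truncSeq a H) / gowersNorm (2 * H) s (truncSeq (fun _ => 1) H)

/-- `ε · h`. -/
def epsDot {s : ℕ} (ε : Fin s → Bool) (h : Fin s → ℕ) : ℕ := ∑ j, if ε j then h j else 0

/-- The Gowers cube product `∏_{ε∈{0,1}^s} C^{|ε|} a(n + ε·h)`. -/
noncomputable def cubeProd (a : ℕ → ℂ) {s : ℕ} (h : Fin s → ℕ) (n : ℕ) : ℂ :=
  ∏ ε : Fin s → Bool,
    if (Finset.univ.filter fun j => ε j = true).card % 2 = 1 then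
      (starRingEnd ℂ) (a (n + epsDot ε h))
    else a (n + epsDot ε h)

/-- Logarithmic average of `f` over the interval `I N`. -/
noncomputable def logAvg (I : ℕ → Finset ℕ) (f : ℕ → ℂ) (N : ℕ) : ℂ :=
  ((∑ n ∈ I N, (n : ℝ)⁻¹ : ℝ) : ℂ)⁻¹ * ∑ n ∈ I N, f n / (n : ℂ)

/-!
Write `v k` for the real part of the limiting correlation of the translates `a (n + k ε)`, where `ε`
runs over the cube `{0,1}^s`. Since logarithmic means over long intervals are shift invariant, `v`
is unchanged when all the `k ε` are translated together, and the Gowers–Cauchy–Schwarz inequality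
shows that the average of `v` over the configurations spanned by pairs of points of the box `[L]^s`
does not increase when the configurations are displaced by an arbitrary `k`.

If `L` makes the undisplaced average nearly minimal, then averaging displaced copies over a much
larger box shows that almost no displacement loses anything. Displacements along `x' = x + h + L`
have positive density among all of them, and they recover the average defining `u ^ 2 ^ s`; so the
minimum is at most `u ^ 2 ^ s`. Finally, the `2 ^ s`-th power of the short-interval norm is an
average over the parallelepipeds of `ℤ/2H` contained in `{0, …, H - 1}`, a set almost invariant
under translation by the cubes spanned by `[L]^s`; hence its limiting mean is at most the box
average, and Jensen's inequality removes the power.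
-/

open scoped BigOperators ComplexConjugate

section Averages

variable {α β M : Type*} [AddCommMonoid M] [Module ℚ≥0 M]

lemma expect_expect_comm (A : Finset α) (B : Finset β) (F : α → α → β → β → M) :
    𝔼 y ∈ A, 𝔼 y' ∈ A, 𝔼 x ∈ B, 𝔼 x' ∈ B, F y y' x x' =
      𝔼 x ∈ B, 𝔼 x' ∈ B, 𝔼 y ∈ A, 𝔼 y' ∈ A, F y y' x x' := by
  simp only [← expect_product' A A, ← expect_product' B B]
  exact expect_comm _ _ _

lemma expect_piFinset_succ {s : ℕ} (S : Finset α) (φ : (Fin (s + 1) → α) → M) :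
    𝔼 x ∈ Fintype.piFinset (fun _ : Fin (s + 1) => S), φ x =
      𝔼 y ∈ S, 𝔼 x ∈ Fintype.piFinset (fun _ : Fin s => S), φ (Fin.cons y x) := by
  rw [← expect_product']
  refine (expect_equiv (Fin.consEquiv fun _ => α) (fun p => ?_) fun _ _ => rfl).symm
  simp [Fin.consEquiv, Fin.forall_fin_succ]

lemma expect_fin_succ {s : ℕ} [Fintype α] (φ : (Fin (s + 1) → α) → M) :
    𝔼 x, φ x = 𝔼 y, 𝔼 x : Fin s → α, φ (Fin.cons y x) := by
  classical
  simpa only [Fintype.piFinset_univ] using expect_piFinset_succ univ φ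

end Averages

section CubeProducts

variable {s : ℕ}

/-- Complex conjugation if the vertex `ε` of the cube has an odd number of `true` coordinates, the
identity otherwise: the operator `C^{|ε|}`. -/
noncomputable def parityConj (ε : Fin s → Bool) : ℂ →+* ℂ :=
  if (univ.filter fun j => ε j = true).card % 2 = 1 then starRingEnd ℂ else RingHom.id ℂ

lemma parityConj_conj (ε : Fin s → Bool) (z : ℂ) :
    parityConj ε (conj z) = conj (parityConj ε z) := by
  unfold parityConj; split_ifs <;> rfl

lemma norm_parityConj (ε : Fin s → Bool) (z : ℂ) : ‖parityConj ε z‖ = ‖z‖ := by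
  unfold parityConj; split_ifs <;> simp

lemma parityConj_cons_false (ε : Fin s → Bool) :
    parityConj (Fin.cons false ε : Fin (s + 1) → Bool) = parityConj ε := by
  simp [parityConj, Fin.card_filter_univ_succ]

lemma parityConj_cons_true (ε : Fin s → Bool) (z : ℂ) :
    parityConj (Fin.cons true ε : Fin (s + 1) → Bool) z = conj (parityConj ε z) := by
  simp only [parityConj, Fin.card_filter_univ_succ, Fin.cons_zero, Fin.cons_succ, if_true]
  split_ifs
  · omega
  · rfl
  · simp
  · omega

/-- The product over the vertices of the cube `{0,1}^s` with alternating conjugations,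
`∏_ε C^{|ε|} F ε`. -/
noncomputable def cubeConjProd (F : (Fin s → Bool) → ℂ) : ℂ := ∏ ε, parityConj ε (F ε)

lemma cubeConjProd_mul (F G : (Fin s → Bool) → ℂ) :
    cubeConjProd (fun ε => F ε * G ε) = cubeConjProd F * cubeConjProd G := by
  simp [cubeConjProd, prod_mul_distrib]

lemma cubeConjProd_conj (F : (Fin s → Bool) → ℂ) :
    cubeConjProd (fun ε => conj (F ε)) = conj (cubeConjProd F) := by
  simp [cubeConjProd, parityConj_conj]

lemma cubeConjProd_succ (F : (Fin (s + 1) → Bool) → ℂ) :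
    cubeConjProd F =
      cubeConjProd fun ε => F (Fin.cons false ε) * conj (F (Fin.cons true ε)) := by
  rw [cubeConjProd_mul, cubeConjProd_conj, cubeConjProd,
    ← (Fin.consEquiv fun _ : Fin (s + 1) => Bool).prod_comp, Fintype.prod_prod_type]
  simp [Fin.consEquiv, cubeConjProd, parityConj_cons_false, parityConj_cons_true, mul_comm]

lemma norm_cubeConjProd_le_one {F : (Fin s → Bool) → ℂ} (hF : ∀ ε, ‖F ε‖ ≤ 1) :
    ‖cubeConjProd F‖ ≤ 1 := by
  rw [cubeConjProd, norm_prod]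
  exact prod_le_one (fun _ _ => norm_nonneg _) fun ε _ => (norm_parityConj ε _).trans_le (hF ε)

end CubeProducts

section GowersCauchySchwarz

variable {α : Type*} {s : ℕ}

/-- The vertex of the box spanned by `x` and `x'` that takes its `j`-th coordinate from `x'` if
`ε j` is `true` and from `x` otherwise. -/
def cubeVertex (x x' : Fin s → α) (ε : Fin s → Bool) : Fin s → α := fun j =>
  if ε j then x' j else x j

lemma cubeVertex_cons (y y' : α) (x x' : Fin s → α) (b : Bool) (ε : Fin s → Bool) :
    cubeVertex (Fin.cons y x : Fin (s + 1) → α) (Fin.cons y' x') (Fin.cons b ε) =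
      Fin.cons (if b then y' else y) (cubeVertex x x' ε) := by
  funext j
  cases j using Fin.cases <;> rfl

/-- The Gowers box inner product of the functions `f ε` on `S^s`, one for each vertex of the
cube. -/
noncomputable def boxInner (S : Finset α) (f : (Fin s → Bool) → (Fin s → α) → ℂ) : ℂ :=
  𝔼 x ∈ Fintype.piFinset fun _ => S, 𝔼 x' ∈ Fintype.piFinset fun _ => S,
    cubeConjProd fun ε => f ε (cubeVertex x x' ε)

lemma boxInner_succ (S : Finset α) (f : (Fin (s + 1) → Bool) → (Fin (s + 1) → α) → ℂ) :
    boxInner S f = 𝔼 y ∈ S, 𝔼 y' ∈ S, boxInner S fun ε v =>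
      f (Fin.cons false ε) (Fin.cons y v) * conj (f (Fin.cons true ε) (Fin.cons y' v)) := by
  simp only [boxInner, expect_piFinset_succ, cubeConjProd_succ (s := s), cubeVertex_cons,
    Bool.false_eq_true, if_true, if_false]
  exact expect_congr rfl fun y _ => expect_comm _ _ _

lemma boxInner_succ_eq_expect_mul_conj (S : Finset α)
    (f : (Fin (s + 1) → Bool) → (Fin (s + 1) → α) → ℂ) :
    boxInner S f = 𝔼 x ∈ Fintype.piFinset fun _ => S, 𝔼 x' ∈ Fintype.piFinset fun _ => S,
      (𝔼 y ∈ S, cubeConjProd fun ε => f (Fin.cons false ε) (Fin.cons y (cubeVertex x x' ε))) *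
        conj (𝔼 y ∈ S,
          cubeConjProd fun ε => f (Fin.cons true ε) (Fin.cons y (cubeVertex x x' ε))) := by
  rw [boxInner_succ]
  simp only [boxInner, map_expect, expect_mul_expect, cubeConjProd_mul, cubeConjProd_conj]
  exact expect_expect_comm _ _ _

lemma re_mul_conj_le_expect (p : Bool → ℂ) :
    (p false * conj (p true)).re ≤ 𝔼 b, (p b * conj (p b)).re := by
  have expand : 𝔼 b, (p b * conj (p b)).re =
      ((p true * conj (p true)).re + (p false * conj (p false)).re) / 2 := by
    rw [Fintype.expect_eq_sum_div_card, Fintype.sum_bool, Fintype.card_bool, Nat.cast_ofNat]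
  rw [expand]
  simp only [Complex.mul_re, Complex.conj_re, Complex.conj_im]
  nlinarith [sq_nonneg ((p false).re - (p true).re), sq_nonneg ((p false).im - (p true).im)]

lemma re_boxInner_succ_le_expect (S : Finset α)
    (f : (Fin (s + 1) → Bool) → (Fin (s + 1) → α) → ℂ) :
    (boxInner S f).re ≤ 𝔼 b, (boxInner S fun ε => f (Fin.cons b (Fin.tail ε))).re := by
  simp only [boxInner_succ_eq_expect_mul_conj, Complex.re_expect, Fin.tail_cons]
  rw [expect_comm univ]
  refine expect_le_expect fun x _ => ?_
  rw [expect_comm univ]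
  exact expect_le_expect fun x' _ => re_mul_conj_le_expect fun b => 𝔼 y ∈ S,
    cubeConjProd fun ε => f (Fin.cons b ε) (Fin.cons y (cubeVertex x x' ε))

theorem re_boxInner_le_expect (S : Finset α) (f : (Fin s → Bool) → (Fin s → α) → ℂ) :
    (boxInner S f).re ≤ 𝔼 ε, (boxInner S fun _ => f ε).re := by
  induction s with
  | zero =>
    rw [univ_unique, expect_singleton]
    exact (congrArg (fun g => (boxInner S g).re)
      (funext fun ε => congrArg f (Subsingleton.elim _ _))).le
  | succ s ih =>
    have fibrewise (g : (Fin s → Bool) → (Fin (s + 1) → α) → ℂ) :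
        (boxInner S fun ε => g (Fin.tail ε)).re ≤ 𝔼 ε, (boxInner S fun _ => g ε).re := by
      simp only [boxInner_succ, Complex.re_expect, Fin.tail_cons]
      rw [expect_comm univ]
      refine expect_le_expect fun y _ => ?_
      rw [expect_comm univ]
      exact expect_le_expect fun y' _ => ih _
    calc (boxInner S f).re
        ≤ 𝔼 b, (boxInner S fun ε => f (Fin.cons b (Fin.tail ε))).re :=
          re_boxInner_succ_le_expect S f
      _ ≤ 𝔼 b, 𝔼 ε : Fin s → Bool, (boxInner S fun _ => f (Fin.cons b ε)).re :=
          expect_le_expect fun b _ => fibrewise fun ε => f (Fin.cons b ε)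
      _ = 𝔼 ε, (boxInner S fun _ => f ε).re := by rw [expect_fin_succ]

end GowersCauchySchwarz

section LogarithmicMeans

/-- The logarithmic mean `𝔼^{log}_{n∈A} r n` of a real sequence, as a linear functional of `r`; it
is `0` when `A ⊆ {0}`. -/
noncomputable def logMean (A : Finset ℕ) : (ℕ → ℝ) →ₗ[ℝ] ℝ :=
  (∑ n ∈ A, (n : ℝ)⁻¹)⁻¹ • ∑ n ∈ A, (n : ℝ)⁻¹ • LinearMap.proj n

lemma logMean_apply (A : Finset ℕ) (r : ℕ → ℝ) :
    logMean A r = (∑ n ∈ A, (n : ℝ)⁻¹)⁻¹ * ∑ n ∈ A, (n : ℝ)⁻¹ * r n := by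
  simp [logMean]

lemma re_logAvg (I : ℕ → Finset ℕ) (f : ℕ → ℂ) (N : ℕ) :
    (logAvg I f N).re = logMean (I N) fun n => (f n).re := by
  rw [logAvg, logMean_apply, ← Complex.ofReal_inv, Complex.re_ofReal_mul, Complex.re_sum]
  congr! 2 with n
  rw [← Complex.ofReal_natCast, Complex.div_ofReal_re, div_eq_inv_mul]

lemma tendsto_logMean_expect {ι : Type*} {I : ℕ → Finset ℕ} {S : Finset ι} {r : ι → ℕ → ℝ}
    {v : ι → ℝ} (h : ∀ i ∈ S, Tendsto (fun N => logMean (I N) (r i)) atTop (𝓝 (v i))) :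
    Tendsto (fun N => logMean (I N) fun n => 𝔼 i ∈ S, r i n) atTop (𝓝 (𝔼 i ∈ S, v i)) := by
  have logMean_expect (A : Finset ℕ) :
      logMean A (fun n => 𝔼 i ∈ S, r i n) = 𝔼 i ∈ S, logMean A (r i) := by
    simp only [logMean_apply, ← mul_expect, expect_sum_comm]
  simp only [logMean_expect]
  simp only [expect_eq_sum_div_card]
  exact (tendsto_finsetSum S h).div_const _

lemma logMean_mono (A : Finset ℕ) {r t : ℕ → ℝ} (h : ∀ n, r n ≤ t n) :
    logMean A r ≤ logMean A t := by
  simp only [logMean_apply]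
  gcongr with n
  exact h n

lemma logMean_nonneg (A : Finset ℕ) {r : ℕ → ℝ} (hr : ∀ n, 0 ≤ r n) : 0 ≤ logMean A r :=
  (map_zero (logMean A)).symm.trans_le (logMean_mono A hr)

lemma logMean_one_le (A : Finset ℕ) : logMean A (fun _ => 1) ≤ 1 := by
  simpa [logMean_apply] using inv_mul_le_one

lemma abs_logMean_le_one (A : Finset ℕ) {r : ℕ → ℝ} (hr : ∀ n, |r n| ≤ 1) :
    |logMean A r| ≤ 1 := by
  refine abs_le'.2 ⟨?_, ?_⟩
  · exact (logMean_mono A fun n => (abs_le.1 (hr n)).2).trans (logMean_one_le A)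
  · rw [← map_neg]
    exact (logMean_mono A fun n => neg_le.1 (abs_le.1 (hr n)).1).trans (logMean_one_le A)

lemma logMean_pow_le (A : Finset ℕ) {r : ℕ → ℝ} (hr : ∀ n, 0 ≤ r n) {k : ℕ} (hk : k ≠ 0) :
    logMean A r ^ k ≤ logMean A fun n => r n ^ k := by
  simp only [logMean_apply]
  rcases eq_or_ne (∑ n ∈ A, (n : ℝ)⁻¹) 0 with weight_zero | weight_ne
  · simp [weight_zero, hk]
  have jensen := Real.pow_arith_mean_le_arith_mean_pow A
    (fun n => (∑ n ∈ A, (n : ℝ)⁻¹)⁻¹ * (n : ℝ)⁻¹) r (fun n _ => by positivity)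
    (by rw [← mul_sum, inv_mul_cancel₀ weight_ne]) (fun n _ => hr n) k
  simpa only [mul_sum, mul_assoc] using jensen

lemma abs_sum_mul_succ_sub_le {w r : ℕ → ℝ} {lo m : ℕ} (hw : AntitoneOn w (Set.Ici lo))
    (hw₀ : ∀ n, 0 ≤ w n) (hr : ∀ n, |r n| ≤ 1) (hm : lo ≤ m) :
    |∑ n ∈ Ico lo m, w n * (r (n + 1) - r n)| ≤ 2 * w lo := by
  have weighted_le {c : ℝ} (hc : 0 ≤ c) (n : ℕ) : |c * r n| ≤ c := by
    rw [abs_mul, abs_of_nonneg hc]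
    exact mul_le_of_le_one_right hc (hr n)
  have summed_by_parts :
      |∑ n ∈ Ico lo m, w n * (r (n + 1) - r n) - w m * r m| ≤ 2 * w lo - w m := by
    induction m, hm using Nat.le_induction with
    | base => simpa [two_mul] using weighted_le (hw₀ lo) lo
    | succ m hm ih =>
      have decrease : 0 ≤ w m - w (m + 1) :=
        sub_nonneg.2 (hw (Set.mem_Ici.2 hm) (Set.mem_Ici.2 (by lia)) (by lia))
      calc |∑ n ∈ Ico lo (m + 1), w n * (r (n + 1) - r n) - w (m + 1) * r (m + 1)|
          = |(∑ n ∈ Ico lo m, w n * (r (n + 1) - r n) - w m * r m) +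
              (w m - w (m + 1)) * r (m + 1)| := by
            rw [sum_Ico_succ_top hm]
            ring_nf
        _ ≤ (2 * w lo - w m) + (w m - w (m + 1)) :=
            (abs_add_le _ _).trans (add_le_add ih (weighted_le decrease _))
        _ = 2 * w lo - w (m + 1) := by ring
  have := weighted_le (hw₀ m) m
  rw [abs_le] at *
  constructor <;> linarith

lemma harmonic_sum_le_mul_sum_inv {lo : ℕ} (hlo : 1 ≤ lo) (hi : ℕ) :
    ∑ i ∈ range #(Icc lo hi), 1 / ((i : ℝ) + 1) ≤ lo * ∑ n ∈ Icc lo hi, (n : ℝ)⁻¹ := by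
  rw [Nat.card_Icc, ← Finset.Ico_succ_right_eq_Icc, Nat.succ_eq_succ, sum_Ico_eq_sum_range, mul_sum]
  refine sum_le_sum fun i _ => ?_
  have : (1 : ℝ) ≤ lo := by exact_mod_cast hlo
  rw [← div_eq_mul_inv, div_le_div_iff₀ (by positivity) (by positivity)]
  push_cast
  nlinarith [i.cast_nonneg (α := ℝ)]

/-- The logarithmic means over `I N` asymptotically ignore a translation of the sequence. -/
def AsymptoticallyShiftInvariant (I : ℕ → Finset ℕ) : Prop :=
  ∀ r : ℕ → ℝ, (∀ n, |r n| ≤ 1) →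
    Tendsto (fun N => logMean (I N) (fun n => r (n + 1)) - logMean (I N) r) atTop (𝓝 0)

lemma abs_logMean_succ_sub_le {lo hi : ℕ} (hlo : 1 ≤ lo) (hle : lo ≤ hi) {r : ℕ → ℝ}
    (hr : ∀ n, |r n| ≤ 1) :
    |logMean (Icc lo hi) (fun n => r (n + 1)) - logMean (Icc lo hi) r| ≤
      2 * (∑ i ∈ range #(Icc lo hi), 1 / ((i : ℝ) + 1))⁻¹ := by
  have inv_antitone : AntitoneOn (fun n : ℕ => (n : ℝ)⁻¹) (Set.Ici lo) := fun m hm n _ hmn =>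
    inv_anti₀ (by exact_mod_cast hlo.trans hm) (by exact_mod_cast hmn)
  have harmonic_pos : 0 < ∑ i ∈ range #(Icc lo hi), 1 / ((i : ℝ) + 1) :=
    sum_pos (fun i _ => by positivity) (by simpa using by lia)
  have numerator := abs_sum_mul_succ_sub_le inv_antitone (fun n => by positivity) hr
    (hle.trans hi.le_succ)
  rw [← map_sub, logMean_apply, abs_mul, abs_of_nonneg (by positivity)]
  calc (∑ n ∈ Icc lo hi, (n : ℝ)⁻¹)⁻¹ *
        |∑ n ∈ Icc lo hi, (n : ℝ)⁻¹ * (r (n + 1) - r n)|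
      ≤ (∑ n ∈ Icc lo hi, (n : ℝ)⁻¹)⁻¹ * (2 * (lo : ℝ)⁻¹) := by gcongr; exact numerator
    _ = 2 * (lo * ∑ n ∈ Icc lo hi, (n : ℝ)⁻¹)⁻¹ := by rw [mul_inv]; ring
    _ ≤ 2 * (∑ i ∈ range #(Icc lo hi), 1 / ((i : ℝ) + 1))⁻¹ := by
        gcongr
        exact harmonic_sum_le_mul_sum_inv hlo hi

lemma asymptoticallyShiftInvariant_Icc {lo hi : ℕ → ℕ} (hlo : ∀ N, 1 ≤ lo N)
    (hcard : Tendsto (fun N => #(Icc (lo N) (hi N))) atTop atTop) :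
    AsymptoticallyShiftInvariant fun N => Icc (lo N) (hi N) := by
  intro r hr
  have error_tendsto : Tendsto (fun N => 2 *
      (∑ i ∈ range #(Icc (lo N) (hi N)), 1 / ((i : ℝ) + 1))⁻¹) atTop (𝓝 0) := by
    simpa using
      ((Real.tendsto_sum_range_one_div_nat_succ_atTop.comp hcard).inv_tendsto_atTop).const_mul 2
  refine squeeze_zero_norm' ?_ error_tendsto
  filter_upwards [hcard.eventually_ge_atTop 1] with N hN
  exact abs_logMean_succ_sub_le (hlo N) (by simpa using card_pos.1 hN) hr

lemma AsymptoticallyShiftInvariant.tendsto_logMean_add {I : ℕ → Finset ℕ}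
    (hI : AsymptoticallyShiftInvariant I) {r : ℕ → ℝ} (hr : ∀ n, |r n| ≤ 1) {v : ℝ}
    (h : Tendsto (fun N => logMean (I N) r) atTop (𝓝 v)) (t : ℕ) :
    Tendsto (fun N => logMean (I N) fun n => r (n + t)) atTop (𝓝 v) := by
  induction t with
  | zero => exact h
  | succ t ih =>
    simpa [add_right_comm, ← add_assoc] using (hI (fun n => r (n + t)) fun n => hr _).add ih

end LogarithmicMeans

section Translations

lemma abs_expect_le_of_forall_abs_le {ι : Type*} {S : Finset ι} {f : ι → ℝ} {c : ℝ} (hc : 0 ≤ c)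
    (h : ∀ i ∈ S, |f i| ≤ c) : |𝔼 i ∈ S, f i| ≤ c := by
  rcases S.eq_empty_or_nonempty with rfl | hS
  · simpa using hc
  · exact (abs_expect_le S f).trans (expect_le hS h)

lemma abs_expect_comp_sub_expect_le {ι : Type*} [DecidableEq ι] (A : Finset ι) {τ : ι → ι}
    (hτ : Function.Injective τ) {G : ι → ℝ} (hG : ∀ i, |G i| ≤ 1) :
    |𝔼 i ∈ A, G (τ i) - 𝔼 i ∈ A, G i| ≤ 2 * (#{i ∈ A | τ i ∉ A} / #A : ℝ) := by
  have abs_sum_le (T : Finset ι) : |∑ i ∈ T, G i| ≤ #T :=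
    (abs_sum_le_sum_abs _ _).trans (by simpa using sum_le_card_nsmul T _ 1 fun i _ => hG i)
  have image_sdiff : A.image τ \ A = {i ∈ A | τ i ∉ A}.image τ := by grind
  have card_image_sdiff : #(A.image τ \ A) = #{i ∈ A | τ i ∉ A} := by
    rw [image_sdiff, card_image_of_injective _ hτ]
  have card_sdiff_image : #(A \ A.image τ) = #{i ∈ A | τ i ∉ A} := by
    rw [card_sdiff_comm (card_image_of_injective A hτ).symm, card_image_sdiff]
  have sum_difference : |∑ i ∈ A, G (τ i) - ∑ i ∈ A, G i| ≤ 2 * #{i ∈ A | τ i ∉ A} := by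
    rw [← sum_image hτ.injOn, ← sum_sdiff_sub_sum_sdiff, two_mul]
    nth_rw 1 [← card_image_sdiff, ← card_sdiff_image]
    exact (abs_sub _ _).trans (add_le_add (abs_sum_le _) (abs_sum_le _))
  rw [expect_eq_sum_div_card, expect_eq_sum_div_card, ← sub_div, abs_div, Nat.abs_cast, mul_div]
  gcongr

variable {s : ℕ}

/-- The integer grid `[L]^s = {1, …, L}^s`. -/
abbrev grid (s L : ℕ) : Finset (Fin s → ℕ) := Fintype.piFinset fun _ => Icc 1 L

lemma card_grid (s L : ℕ) : (#(grid s L) : ℝ) = (L : ℝ) ^ s := by simp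

lemma grid_nonempty {L : ℕ} (hL : 0 < L) : (grid s L).Nonempty :=
  ⟨fun _ => 1, by simpa using fun _ => Nat.one_le_of_lt hL⟩

lemma add_mem_grid {H B M : ℕ} {h b : Fin s → ℕ} (hh : h ∈ grid s H) (hb : ∀ j, b j ≤ B)
    (hM : H + B ≤ M) : h + b ∈ grid s M := by
  simp only [Fintype.mem_piFinset, mem_Icc, Pi.add_apply] at hh ⊢
  exact fun j => ⟨by linarith [hh j], by linarith [hh j, hb j]⟩

lemma abs_expect_grid_add_sub_le {G : (Fin s → ℕ) → ℝ} (hG : ∀ h, |G h| ≤ 1) {H B : ℕ} (hH : 0 < H)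
    {b : Fin s → ℕ} (hb : ∀ j, b j ≤ B) :
    |𝔼 h ∈ grid s H, G (h + b) - 𝔼 h ∈ grid s H, G h| ≤ 2 * ((1 + B / H : ℝ) ^ s - 1) := by
  have grid_subset : grid s H ⊆ grid s (H + B) := fun h hh => by
    simpa using add_mem_grid hh (b := 0) (fun _ => B.zero_le) le_rfl
  have escape_card : #{h ∈ grid s H | h + b ∉ grid s H} ≤ #(grid s (H + B) \ grid s H) :=
    card_le_card_of_injOn (· + b) (fun h hh => by
      simp only [coe_filter, Set.mem_ofPred_eq] at hh
      exact mem_coe.2 (mem_sdiff.2 ⟨add_mem_grid hh.1 hb le_rfl, hh.2⟩))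
      (add_left_injective b).injOn
  have escape_density :
      (#{h ∈ grid s H | h + b ∉ grid s H} / #(grid s H) : ℝ) ≤ (1 + B / H : ℝ) ^ s - 1 := by
    rw [div_le_iff₀ (by simpa using by positivity)]
    calc (#{h ∈ grid s H | h + b ∉ grid s H} : ℝ)
        ≤ #(grid s (H + B) \ grid s H) := by exact_mod_cast escape_card
      _ = ((1 + B / H : ℝ) ^ s - 1) * #(grid s H) := by
        rw [cast_card_sdiff grid_subset, card_grid, card_grid, sub_mul, ← mul_pow]
        field_simp
        push_cast
        ring
  exact (abs_expect_comp_sub_expect_le _ (add_left_injective b) hG).trans (by gcongr)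

lemma abs_expect_grid_expect_grid_add_sub_le {G : (Fin s → ℕ) → (Fin s → ℕ) → ℝ}
    (hG : ∀ x x', |G x x'| ≤ 1) {M L : ℕ} (hM : 0 < M) {y y' : Fin s → ℕ} (hy : ∀ j, y j ≤ L)
    (hy' : ∀ j, y' j ≤ L) :
    |𝔼 x ∈ grid s M, 𝔼 x' ∈ grid s M, G (x + y) (x' + y') -
        𝔼 x ∈ grid s M, 𝔼 x' ∈ grid s M, G x x'| ≤ 4 * ((1 + L / M : ℝ) ^ s - 1) := by
  have first := abs_expect_grid_add_sub_le (G := fun x => 𝔼 x' ∈ grid s M, G x (x' + y'))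
    (fun x => abs_expect_le_of_forall_abs_le zero_le_one fun x' _ => hG _ _) hM hy
  have second := abs_expect_grid_add_sub_le (G := fun x' => 𝔼 x ∈ grid s M, G x x')
    (fun x => abs_expect_le_of_forall_abs_le zero_le_one fun x' _ => hG _ _) hM hy'
  rw [expect_comm, expect_comm (grid s M) (grid s M) fun x' x => G x x'] at second
  rw [abs_le] at *
  constructor <;> linarith

lemma expect_grid_add_le {g : (Fin s → ℕ) → ℝ} (hg : ∀ x, 0 ≤ g x) {H B M : ℕ} (hH : 0 < H)
    (hM : H + B ≤ M) {b : Fin s → ℕ} (hb : ∀ j, b j ≤ B) :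
    𝔼 h ∈ grid s H, g (h + b) ≤ (M / H : ℝ) ^ s * 𝔼 x ∈ grid s M, g x := by
  have sum_le : ∑ h ∈ grid s H, g (h + b) ≤ ∑ x ∈ grid s M, g x := by
    rw [← sum_image (g := (· + b)) (add_left_injective b).injOn]
    refine sum_le_sum_of_subset_of_nonneg (image_subset_iff.2 fun h hh => ?_) fun x _ _ => hg x
    exact add_mem_grid hh hb hM
  have : (0 : ℝ) < M := by exact_mod_cast hH.trans_le (by lia)
  rw [expect_eq_sum_div_card, expect_eq_sum_div_card, card_grid, card_grid, div_pow]
  calc (∑ h ∈ grid s H, g (h + b)) / (H : ℝ) ^ s ≤ (∑ x ∈ grid s M, g x) / (H : ℝ) ^ s := by gcongr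
    _ = M ^ s / H ^ s * ((∑ x ∈ grid s M, g x) / M ^ s) := by field_simp

lemma expect_grid_expect_grid_add_le {g : (Fin s → ℕ) → (Fin s → ℕ) → ℝ} (hg : ∀ x x', 0 ≤ g x x')
    {L H : ℕ} (hH : 0 < H) (hL : L ≤ H) :
    𝔼 x ∈ grid s H, 𝔼 h ∈ grid s H, g x (h + (x + fun _ => L)) ≤
      9 ^ s * 𝔼 x ∈ grid s (3 * H), 𝔼 x' ∈ grid s (3 * H), g x x' := by
  have ratio : ((3 * H : ℕ) / H : ℝ) = 3 := by
    push_cast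
    field_simp
  calc 𝔼 x ∈ grid s H, 𝔼 h ∈ grid s H, g x (h + (x + fun _ => L))
      ≤ 𝔼 x ∈ grid s H, 3 ^ s * 𝔼 x' ∈ grid s (3 * H), g x x' := by
        refine expect_le_expect fun x hx => ?_
        have offset_le (j : Fin s) : x j + L ≤ 2 * H := by
          have := (mem_Icc.1 (Fintype.mem_piFinset.1 hx j)).2
          lia
        simpa only [ratio] using
          expect_grid_add_le (M := 3 * H) (b := x + fun _ => L) (hg x) hH (by lia) offset_le
    _ ≤ 3 ^ s * 𝔼 x ∈ grid s (3 * H), 3 ^ s * 𝔼 x' ∈ grid s (3 * H), g x x' := by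
        simpa only [ratio, add_zero] using expect_grid_add_le (M := 3 * H) (B := 0) (b := 0)
          (fun x => mul_nonneg (by positivity) (expect_nonneg fun x' _ => hg x x')) hH (by lia)
          fun _ => le_rfl
    _ = 9 ^ s * 𝔼 x ∈ grid s (3 * H), 𝔼 x' ∈ grid s (3 * H), g x x' := by
        rw [← mul_expect, ← mul_assoc, ← mul_pow]
        norm_num

lemma tendsto_one_add_div_pow_sub_one (s : ℕ) (c : ℝ) :
    Tendsto (fun H : ℕ => (1 + c / H) ^ s - 1) atTop (𝓝 0) := by
  simpa using (((tendsto_const_div_atTop_nhds_zero_nat c).const_add 1).pow s).sub_const 1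

end Translations

section VertexSums

variable {M : Type*} [AddCommMonoid M] {s : ℕ}

/-- The sum of the coordinates of the vertex `ε` of the box spanned by `x` and `x'`; for `x = 0`
it is the dot product `ε · x'`. -/
def vertexSum (x x' : Fin s → M) (ε : Fin s → Bool) : M := ∑ j, cubeVertex x x' ε j

lemma vertexSum_add (x x' y y' : Fin s → M) :
    vertexSum (x + y) (x' + y') = vertexSum x x' + vertexSum y y' := by
  funext ε
  simp only [vertexSum, cubeVertex, Pi.add_apply, ← sum_add_distrib]
  exact sum_congr rfl fun j _ => by split_ifs <;> rfl

lemma vertexSum_self (x : Fin s → M) (ε : Fin s → Bool) : vertexSum x x ε = ∑ j, x j := by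
  simp [vertexSum, cubeVertex]

lemma epsDot_eq_vertexSum (ε : Fin s → Bool) (h : Fin s → ℕ) : epsDot ε h = vertexSum 0 h ε := rfl

end VertexSums

section CubeCorrelations

variable {s : ℕ}

/-- The average of a function `v` of cube-indexed integer configurations over the configurations
spanned by two points of the grid `[L]^s`, all displaced by `k`. -/
noncomputable def boxMean (v : ((Fin s → Bool) → ℕ) → ℝ) (L : ℕ) (k : (Fin s → Bool) → ℕ) : ℝ :=
  𝔼 x ∈ grid s L, 𝔼 x' ∈ grid s L, v (k + vertexSum x x')

/-- The properties of the limiting correlations `v k = lim_N 𝔼^{log}_{n∈I_N} ∏_ε C^{|ε|} a(n + k ε)`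
that the extremal argument uses: they are bounded by `1`, invariant under translation of the
configuration `k`, and satisfy the Gowers–Cauchy–Schwarz inequality. -/
structure IsCubeCorrelation (v : ((Fin s → Bool) → ℕ) → ℝ) : Prop where
  abs_le_one (k) : |v k| ≤ 1
  add_const (k) (t : ℕ) : v (k + fun _ => t) = v k
  boxMean_le (L k) : boxMean v L k ≤ boxMean v L 0

lemma expect_grid_re_cubeConjProd_le (a : ℕ → ℂ) (L : ℕ) (k : (Fin s → Bool) → ℕ) :
    𝔼 x ∈ grid s L, 𝔼 x' ∈ grid s L, (cubeConjProd fun ε => a (k ε + vertexSum x x' ε)).re ≤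
      𝔼 ε, 𝔼 x ∈ grid s L, 𝔼 x' ∈ grid s L,
        (cubeConjProd fun ε' => a (k ε + vertexSum x x' ε')).re := by
  have gowers_cauchy_schwarz :=
    re_boxInner_le_expect (Icc 1 L) fun (ε : Fin s → Bool) x => a (k ε + ∑ j, x j)
  simp only [boxInner, Complex.re_expect] at gowers_cauchy_schwarz
  exact gowers_cauchy_schwarz

lemma isCubeCorrelation_of_tendsto {I : ℕ → Finset ℕ} (hI : AsymptoticallyShiftInvariant I)
    {a : ℕ → ℂ} (ha : ∀ n, ‖a n‖ ≤ 1) {v : ((Fin s → Bool) → ℕ) → ℝ}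
    (hv : ∀ k, Tendsto (fun N => logMean (I N) fun n => (cubeConjProd fun ε => a (n + k ε)).re)
      atTop (𝓝 (v k))) :
    IsCubeCorrelation v := by
  have abs_re_le (k : (Fin s → Bool) → ℕ) (n) : |(cubeConjProd fun ε => a (n + k ε)).re| ≤ 1 :=
    (Complex.abs_re_le_norm _).trans (norm_cubeConjProd_le_one fun ε => ha _)
  have add_const (k) (t : ℕ) : v (k + fun _ => t) = v k := by
    refine tendsto_nhds_unique (hv _) ?_
    convert hI.tendsto_logMean_add (abs_re_le k) (hv k) t using 7 with N n ε
    simp only [Pi.add_apply]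
    ring_nf
  refine ⟨fun k => ?_, add_const, fun L k => ?_⟩
  · exact le_of_tendsto (hv k).abs (.of_forall fun N => abs_logMean_le_one _ (abs_re_le k))
  have boxMean_const (t : ℕ) : boxMean v L (fun _ => t) = boxMean v L 0 := by
    simp only [boxMean, add_comm (fun _ => t), add_const, zero_add]
  have boxMean_tendsto (k) : Tendsto (fun N => logMean (I N) fun n => 𝔼 x ∈ grid s L,
      𝔼 x' ∈ grid s L, (cubeConjProd fun ε => a (n + (k + vertexSum x x') ε)).re) atTop
      (𝓝 (boxMean v L k)) := by
    exact tendsto_logMean_expect fun x _ => tendsto_logMean_expect fun x' _ => hv _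
  have averaged_tendsto :=
    tendsto_logMean_expect (S := univ) fun ε _ => boxMean_tendsto fun _ => k ε
  simp only [boxMean_const, expect_const univ_nonempty] at averaged_tendsto
  refine le_of_tendsto_of_tendsto (boxMean_tendsto k) averaged_tendsto (.of_forall fun N => ?_)
  refine logMean_mono _ fun n => ?_
  simpa only [Pi.add_apply, add_assoc] using expect_grid_re_cubeConjProd_le a L (fun ε => n + k ε)

variable {v : ((Fin s → Bool) → ℕ) → ℝ}

namespace IsCubeCorrelation

lemma apply_vertexSum_add_right (hv : IsCubeCorrelation v) (z d : Fin s → ℕ) :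
    v (vertexSum z (d + z)) = v fun ε => epsDot ε d := by
  rw [← hv.add_const (fun ε => epsDot ε d) (∑ j, z j)]
  congr 1
  funext ε
  rw [← zero_add z, vertexSum_add]
  simp [vertexSum_self, epsDot_eq_vertexSum]

lemma boxMean_zero_sub_le (hv : IsCubeCorrelation v) {L M : ℕ} (hL : 0 < L) (hM : 0 < M) :
    boxMean v M 0 - 4 * ((1 + L / M : ℝ) ^ s - 1) ≤
      𝔼 x ∈ grid s M, 𝔼 x' ∈ grid s M, boxMean v L (vertexSum x x') := by
  simp only [boxMean, zero_add, ← vertexSum_add]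
  rw [expect_expect_comm]
  refine le_expect (grid_nonempty hL) fun y hy => le_expect (grid_nonempty hL) fun y' hy' => ?_
  have translated := abs_expect_grid_expect_grid_add_sub_le
    (G := fun x x' => v (vertexSum x x')) (fun x x' => hv.abs_le_one _) hM
    (fun j => (mem_Icc.1 (Fintype.mem_piFinset.1 hy j)).2)
    (fun j => (mem_Icc.1 (Fintype.mem_piFinset.1 hy' j)).2)
  linarith [(abs_le.1 translated).1]

lemma expect_boxMean_le (hv : IsCubeCorrelation v) {L H : ℕ} (hL : 0 < L) (hH : 0 < H)
    (x : Fin s → ℕ) :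
    𝔼 h ∈ grid s H, boxMean v L (vertexSum x (h + (x + fun _ => L))) ≤
      (𝔼 h ∈ grid s H, v fun ε => epsDot ε h) + 2 * ((1 + 2 * L / H : ℝ) ^ s - 1) := by
  simp only [boxMean, ← vertexSum_add]
  rw [expect_comm]
  refine expect_le (grid_nonempty hL) fun y hy => ?_
  rw [expect_comm]
  refine expect_le (grid_nonempty hL) fun y' hy' => ?_
  have hy_le (j) := (mem_Icc.1 (Fintype.mem_piFinset.1 hy j)).2
  have hy'_le (j) := (mem_Icc.1 (Fintype.mem_piFinset.1 hy' j)).2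
  have side (h : Fin s → ℕ) :
      h + (x + fun _ => L) + y' = (h + fun j => L + y' j - y j) + (x + y) := by
    funext j
    have := hy_le j
    simp only [Pi.add_apply]
    lia
  have translated := abs_expect_grid_add_sub_le (G := fun h => v fun ε => epsDot ε h)
    (fun h => hv.abs_le_one _) (B := 2 * L) hH (b := fun j => L + y' j - y j)
    (fun j => by have := hy'_le j; lia)
  push_cast at translated
  simp only [side, hv.apply_vertexSum_add_right]
  linarith [(abs_le.1 translated).2]

-- The deficits `boxMean v L 0 - boxMean v L k` are nonnegative, so their average over the
-- translates `x' = x + h + L` is controlled by the average over all `x, x' ∈ [3H]^s`.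
lemma boxMean_zero_sub_le_mul (hv : IsCubeCorrelation v) {L H : ℕ} (hL : 0 < L) (hLH : L ≤ H) :
    boxMean v L 0 - (𝔼 h ∈ grid s H, v fun ε => epsDot ε h) - 2 * ((1 + 2 * L / H : ℝ) ^ s - 1) ≤
      9 ^ s * (boxMean v L 0 - boxMean v (3 * H) 0 + 4 * ((1 + L / 3 / H : ℝ) ^ s - 1)) := by
  have hH : 0 < H := hL.trans_le hLH
  have deficit_comparison := expect_grid_expect_grid_add_le
    (g := fun x x' => boxMean v L 0 - boxMean v L (vertexSum x x'))
    (fun x x' => sub_nonneg.2 (hv.boxMean_le L _)) hH hLH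
  simp only [expect_sub_distrib, expect_const (grid_nonempty hH),
    expect_const (grid_nonempty (show 0 < 3 * H by lia))] at deficit_comparison
  have shifted_pairs := expect_le (grid_nonempty hH) fun x _ => hv.expect_boxMean_le hL hH x
  have all_pairs := hv.boxMean_zero_sub_le hL (show 0 < 3 * H by lia)
  rw [Nat.cast_mul, Nat.cast_ofNat, ← div_div] at all_pairs
  calc _ ≤ _ := by linarith
    _ ≤ _ := deficit_comparison
    _ ≤ _ := by
      gcongr
      linarith

theorem exists_boxMean_le (hv : IsCubeCorrelation v) {U : ℝ}
    (hU : Tendsto (fun H : ℕ => 𝔼 h ∈ grid s H, v fun ε => epsDot ε h) atTop (𝓝 U)) {δ : ℝ}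
    (hδ : 0 < δ) : ∃ L : ℕ, 0 < L ∧ boxMean v L 0 ≤ U + δ := by
  have bounded : BddBelow (Set.range fun L : ℕ+ => boxMean v L 0) := by
    refine ⟨-1, Set.forall_mem_range.2 fun L => (abs_le.1 ?_).1⟩
    exact abs_expect_le_of_forall_abs_le zero_le_one fun x _ =>
      abs_expect_le_of_forall_abs_le zero_le_one fun x' _ => hv.abs_le_one _
  set m := ⨅ L : ℕ+, boxMean v L 0
  obtain ⟨L, near_optimal⟩ : ∃ L : ℕ+, boxMean v L 0 < m + δ / 9 ^ s :=
    exists_lt_of_ciInf_lt (lt_add_of_pos_right _ (by positivity))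
  refine ⟨L, L.pos, ?_⟩
  have lower_limit := (hU.const_sub (boxMean v L 0)).sub
    ((tendsto_one_add_div_pow_sub_one s (2 * L)).const_mul 2)
  have upper_limit := (((tendsto_one_add_div_pow_sub_one s (L / 3)).const_mul 4).const_add
    (boxMean v L 0 - m)).const_mul (9 ^ s)
  have limits_le := le_of_tendsto_of_tendsto lower_limit upper_limit <| by
    filter_upwards [eventually_ge_atTop (L : ℕ)] with H hLH
    have hm : m ≤ boxMean v (3 * H) 0 :=
      ciInf_le bounded (⟨3 * H, by have := L.pos; lia⟩ : ℕ+)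
    exact (hv.boxMean_zero_sub_le_mul L.pos hLH).trans (by gcongr)
  have near : 9 ^ s * (boxMean v L 0 - m) ≤ δ := by
    rw [← le_div_iff₀' (by positivity)]
    linarith
  linarith

end IsCubeCorrelation

end CubeCorrelations

section GowersNorms

variable {s : ℕ}

/-- The vertex `m + ε · h` of the parallelepiped `p = (m, h)` with base point `m` and sides `h`. -/
def cubePoint {M : Type*} [AddCommMonoid M] (p : M × (Fin s → M)) (ε : Fin s → Bool) : M :=
  p.1 + vertexSum 0 p.2 ε

lemma cubePoint_add {M : Type*} [AddCommMonoid M] (p q : M × (Fin s → M)) :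
    cubePoint (p + q) = cubePoint p + cubePoint q := by
  funext ε
  have := congrFun (vertexSum_add 0 p.2 0 q.2) ε
  rw [add_zero] at this
  simp only [cubePoint, Prod.fst_add, Prod.snd_add, this, Pi.add_apply]
  exact add_add_add_comm _ _ _ _

lemma cubePoint_cons {M : Type*} [AddCommMonoid M] (m k : M) (h : Fin s → M) (b : Bool)
    (ε : Fin s → Bool) :
    cubePoint (m, (Fin.cons k h : Fin (s + 1) → M)) (Fin.cons b ε) =
      cubePoint (m, h) ε + if b then k else 0 := by
  have zero_eq_cons : (0 : Fin (s + 1) → M) = Fin.cons 0 0 := (Fin.cons_self_tail 0).symm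
  simp only [cubePoint, vertexSum, zero_eq_cons, cubeVertex_cons, Fin.sum_cons]
  rw [add_assoc, add_comm (∑ j, _)]

/-- The average of `∏_ε C^{|ε|} g(m + ε · h)` over all parallelepipeds in a finite group, which is
the `2^s`-th power of the `U^s` norm of `g`. -/
noncomputable def gowersMean {G : Type*} [AddCommGroup G] [Fintype G] (s : ℕ) (g : G → ℂ) : ℂ :=
  𝔼 m, 𝔼 h : Fin s → G, cubeConjProd fun ε => g (cubePoint (m, h) ε)

section FiniteGroup

variable {G : Type*} [AddCommGroup G] [Fintype G]

lemma gowersMean_succ (g : G → ℂ) :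
    gowersMean (s + 1) g = 𝔼 k, gowersMean s fun z => g z * conj (g (z + k)) := by
  simp only [gowersMean, expect_fin_succ, cubeConjProd_succ (s := s), cubePoint_cons,
    Bool.false_eq_true, if_true, if_false, add_zero]
  exact expect_comm univ univ _

lemma gowersMean_conj (g : G → ℂ) : gowersMean s (fun z => conj (g z)) = conj (gowersMean s g) := by
  simp only [gowersMean, cubeConjProd_conj, map_expect]

lemma gowersMean_one (g : G → ℂ) : gowersMean 1 g = (‖𝔼 z, g z‖ : ℂ) ^ 2 := by
  have translate (m : G) : 𝔼 k, conj (g (m + k)) = 𝔼 k, conj (g k) :=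
    Fintype.expect_equiv (Equiv.addLeft m) _ _ fun _ => rfl
  have expand : gowersMean 1 g = 𝔼 k, 𝔼 m, g m * conj (g (m + k)) := by
    rw [gowersMean_succ]
    simp [gowersMean, cubeConjProd, parityConj, cubePoint, vertexSum]
  rw [expand, expect_comm univ univ, ← Complex.mul_conj', map_expect, expect_mul]
  simp only [← mul_expect, translate]

end FiniteGroup

lemma inv_mul_sum_range_eq_expect_zmod {D : ℕ} [NeZero D] {K : Type*} [Field K] [CharZero K]
    (φ : ZMod D → K) : (D : K)⁻¹ * ∑ h ∈ range D, φ (h : ZMod D) = 𝔼 z, φ z := by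
  rw [Fintype.expect_eq_sum_div_card, ZMod.card, inv_mul_eq_div]
  congr 1
  refine sum_nbij' (fun h => (h : ZMod D)) ZMod.val (by simp) (fun z _ => ?_) (fun h hh => ?_)
    (by simp) (by simp)
  · exact mem_range.2 z.val_lt
  · exact ZMod.val_cast_of_lt (mem_range.1 hh)

lemma gowersNorm_nonneg (D s : ℕ) (f : ℕ → ℂ) : 0 ≤ gowersNorm D s f := by
  match s with
  | 0 => exact le_rfl
  | 1 => exact norm_nonneg _
  | s + 2 =>
    rw [gowersNorm]
    exact Real.rpow_nonneg (mul_nonneg (by positivity) (sum_nonneg fun h _ =>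
      pow_nonneg (gowersNorm_nonneg D (s + 1) _) _)) _

lemma gowersNorm_pow_eq_re_gowersMean {D : ℕ} [NeZero D] (s : ℕ) (f : ℕ → ℂ) :
    gowersNorm D (s + 1) f ^ 2 ^ (s + 1) =
      (gowersMean (s + 1) fun z : ZMod D => f z.val).re := by
  induction s generalizing f with
  | zero =>
    rw [gowersMean_one, ← inv_mul_sum_range_eq_expect_zmod, ← Complex.ofReal_pow, Complex.ofReal_re]
    simp only [gowersNorm, ZMod.val_natCast, zero_add, pow_one]
  | succ s ih =>
    have difference (h : ℕ) :
        (fun z : ZMod D => f ((z.val + h) % D) * conj (f (z.val % D))) =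
          fun z => conj (f z.val * conj (f (z + (h : ZMod D)).val)) := by
      funext z
      rw [ZMod.val_add, ZMod.val_natCast, Nat.add_mod_mod, Nat.mod_eq_of_lt z.val_lt, map_mul,
        Complex.conj_conj, mul_comm]
    have mean_nonneg : 0 ≤ (D : ℝ)⁻¹ * ∑ h ∈ range D, gowersNorm D (s + 1)
        (fun n => f ((n + h) % D) * conj (f (n % D))) ^ 2 ^ (s + 1) :=
      mul_nonneg (by positivity) (sum_nonneg fun h _ => pow_nonneg (gowersNorm_nonneg _ _ _) _)
    rw [gowersNorm, show (2 : ℝ) ^ (s + 2) = (2 ^ (s + 1 + 1) : ℕ) by push_cast; rfl,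
      Real.rpow_inv_natCast_pow mean_nonneg (by positivity)]
    simp only [ih, difference, gowersMean_conj, Complex.conj_re]
    rw [inv_mul_sum_range_eq_expect_zmod fun h : ZMod D =>
        (gowersMean (s + 1) fun z : ZMod D => f z.val * conj (f (z + h).val)).re,
      gowersMean_succ, Complex.re_expect]

end GowersNorms

section InnerCubes

variable {D s : ℕ}

/-- The least nonnegative representatives of the vertices of a parallelepiped in `ℤ/D`. -/
def cubeHeight (p : ZMod D × (Fin s → ZMod D)) : (Fin s → Bool) → ℕ := fun ε =>
  (cubePoint p ε).val

/-- The parallelepipeds in `ℤ/D` all of whose vertices lie in the interval `{0, …, H - 1}`. -/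
def innerCubes (D s H : ℕ) [NeZero D] : Finset (ZMod D × (Fin s → ZMod D)) :=
  {p | ∀ ε, cubeHeight p ε < H}

lemma mem_innerCubes [NeZero D] {H : ℕ} {p : ZMod D × (Fin s → ZMod D)} :
    p ∈ innerCubes D s H ↔ ∀ ε, cubeHeight p ε < H := by
  simp [innerCubes]

lemma cubeConjProd_truncSeq [NeZero D] (b : ℕ → ℂ) (H : ℕ) (p : ZMod D × (Fin s → ZMod D)) :
    (cubeConjProd fun ε => truncSeq b H (cubeHeight p ε)) =
      if p ∈ innerCubes D s H then cubeConjProd fun ε => b (cubeHeight p ε + 1) else 0 := by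
  split_ifs with hp
  · simp only [truncSeq, mem_innerCubes.1 hp, if_true]
  · obtain ⟨ε, hε⟩ : ∃ ε, ¬ cubeHeight p ε < H := by simpa [mem_innerCubes] using hp
    exact prod_eq_zero (mem_univ ε) (by simp only [truncSeq, hε, if_false, map_zero])

lemma gowersMean_truncSeq [NeZero D] (b : ℕ → ℂ) (H : ℕ) :
    gowersMean s (fun z : ZMod D => truncSeq b H z.val) =
      #(innerCubes D s H) / Fintype.card (ZMod D × (Fin s → ZMod D)) *
        𝔼 p ∈ innerCubes D s H, cubeConjProd fun ε => b (cubeHeight p ε + 1) := by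
  rw [gowersMean, ← expect_product', univ_product_univ, Fintype.expect_eq_sum_div_card]
  change (∑ p, cubeConjProd fun ε => truncSeq b H (cubeHeight p ε)) / _ = _
  simp only [cubeConjProd_truncSeq, sum_ite_mem, univ_inter]
  rw [← card_mul_expect, mul_div_right_comm]

lemma val_add_natCast_of_lt [NeZero D] {z : ZMod D} {c : ℕ} (h : z.val + c < D) :
    (z + (c : ZMod D)).val = z.val + c := by
  rw [ZMod.val_add, ZMod.val_natCast, Nat.add_mod_mod, Nat.mod_eq_of_lt h]

lemma vertexSum_natCast {R : Type*} [AddCommMonoidWithOne R] (y y' : Fin s → ℕ)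
    (ε : Fin s → Bool) :
    ((vertexSum y y' ε : ℕ) : R) = vertexSum (fun j => (y j : R)) (fun j => (y' j : R)) ε := by
  simp only [vertexSum, cubeVertex, Nat.cast_sum, Nat.cast_ite]

lemma vertexSum_le {L : ℕ} {y y' : Fin s → ℕ} (hy : ∀ j, y j ≤ L) (hy' : ∀ j, y' j ≤ L)
    (ε : Fin s → Bool) : vertexSum y y' ε ≤ s * L := by
  have bound : ∀ j ∈ univ, cubeVertex y y' ε j ≤ L := fun j _ => by
    unfold cubeVertex
    split_ifs <;> simp [hy, hy']
  simpa [vertexSum] using sum_le_card_nsmul _ _ _ bound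

/-- The parallelepiped in `ℤ/D` whose vertices are the residues of the sums `vertexSum y y'`. -/
def spannedCube (D : ℕ) (y y' : Fin s → ℕ) : ZMod D × (Fin s → ZMod D) :=
  (∑ j, (y j : ZMod D), fun j => y' j - y j)

lemma cubePoint_spannedCube (y y' : Fin s → ℕ) (ε : Fin s → Bool) :
    cubePoint (spannedCube D y y') ε = (vertexSum y y' ε : ℕ) := by
  rw [vertexSum_natCast]
  simp only [cubePoint, spannedCube, vertexSum, ← sum_add_distrib]
  refine sum_congr rfl fun j _ => ?_
  unfold cubeVertex
  split_ifs <;> simp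

section Translation

variable [NeZero D] {H L : ℕ} {y y' : Fin s → ℕ} {p : ZMod D × (Fin s → ZMod D)}

lemma cubeHeight_add_spannedCube (hD : H + s * L ≤ D) (hy : ∀ j, y j ≤ L) (hy' : ∀ j, y' j ≤ L)
    (hp : p ∈ innerCubes D s H) :
    cubeHeight (p + spannedCube D y y') = cubeHeight p + vertexSum y y' := by
  funext ε
  have inner := mem_innerCubes.1 hp ε
  have small := vertexSum_le hy hy' ε
  simp only [cubeHeight, cubePoint_add, Pi.add_apply, cubePoint_spannedCube] at inner ⊢
  exact val_add_natCast_of_lt (by lia)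

lemma card_filter_cubePoint_mem (T : Finset (ZMod D)) (ε : Fin s → Bool) :
    #{p : ZMod D × (Fin s → ZMod D) | cubePoint p ε ∈ T} = #T * D ^ s := by
  have bijection : #{p : ZMod D × (Fin s → ZMod D) | cubePoint p ε ∈ T} =
      #(T ×ˢ (univ : Finset (Fin s → ZMod D))) :=
    card_nbij' (fun p => (cubePoint p ε, p.2)) (fun p => (p.1 - vertexSum 0 p.2 ε, p.2))
      (fun p hp => by simpa using hp)
      (fun p hp => mem_coe.2 (mem_filter.2 ⟨mem_univ _, by simpa [cubePoint] using hp⟩))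
      (fun p _ => by simp [cubePoint]) (fun p _ => by simp [cubePoint])
  simp [bijection]

lemma card_escaping_le (hD : H + s * L ≤ D) (hy : ∀ j, y j ≤ L) (hy' : ∀ j, y' j ≤ L) :
    #{p ∈ innerCubes D s H | p + spannedCube D y y' ∉ innerCubes D s H} ≤
      2 ^ s * (s * L * D ^ s) := by
  let T : Finset (ZMod D) := {z | z.val ∈ Ico (H - s * L) H}
  have card_T : #T ≤ s * L := by
    calc #T ≤ #(Ico (H - s * L) H) :=
          card_le_card_of_injOn ZMod.val (fun z hz => by simpa [T] using hz)
            (ZMod.val_injective D).injOn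
      _ ≤ s * L := by rw [Nat.card_Ico]; lia
  have escapes_through_T :
      {p ∈ innerCubes D s H | p + spannedCube D y y' ∉ innerCubes D s H} ⊆
        univ.biUnion fun ε : Fin s → Bool => {p | cubePoint p ε ∈ T} := fun p hp => by
    obtain ⟨hp, hpq⟩ := mem_filter.1 hp
    simp only [mem_innerCubes, cubeHeight_add_spannedCube hD hy hy' hp, not_forall, not_lt,
      Pi.add_apply] at hpq
    obtain ⟨ε, hε⟩ := hpq
    have inner := mem_innerCubes.1 hp ε
    have small := vertexSum_le hy hy' ε
    simp only [mem_biUnion, mem_univ, mem_filter, true_and, T, mem_Ico]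
    simp only [cubeHeight] at inner hε
    exact ⟨ε, by lia, inner⟩
  calc _ ≤ #(univ.biUnion fun ε : Fin s → Bool => {p | cubePoint p ε ∈ T}) :=
        card_le_card escapes_through_T
    _ ≤ #(univ : Finset (Fin s → Bool)) * (s * L * D ^ s) :=
        card_biUnion_le_card_mul _ _ _ fun ε _ => by rw [card_filter_cubePoint_mem]; gcongr
    _ = 2 ^ s * (s * L * D ^ s) := by simp

lemma pow_le_card_innerCubes {r : ℕ} (hr : (s + 1) * r < H + s + 1) (hD : H ≤ D) :
    r ^ (s + 1) ≤ #(innerCubes D s H) := by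
  have height {q : ℕ × (Fin s → ℕ)} (hq : q ∈ range r ×ˢ Fintype.piFinset fun _ => range r)
      (ε : Fin s → Bool) :
      cubeHeight ((q.1 : ZMod D), fun j => (q.2 j : ZMod D)) ε < H := by
    simp only [mem_product, Fintype.mem_piFinset, mem_range] at hq
    have small : vertexSum 0 q.2 ε ≤ s * (r - 1) :=
      vertexSum_le (fun _ => (r - 1).zero_le) (fun j => Nat.le_sub_one_of_lt (hq.2 j)) ε
    have point_lt : q.1 + vertexSum 0 q.2 ε < H := by
      obtain ⟨t, rfl⟩ : ∃ t, r = t + 1 := ⟨r - 1, by lia⟩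
      rw [Nat.add_sub_cancel] at small
      nlinarith
    have point : cubePoint ((q.1 : ZMod D), fun j => (q.2 j : ZMod D)) ε =
        (q.1 + vertexSum 0 q.2 ε : ℕ) := by
      rw [Nat.cast_add, vertexSum_natCast]
      simp [cubePoint, Pi.zero_def]
    rw [cubeHeight, point, ZMod.val_cast_of_lt (point_lt.trans_le hD)]
    exact point_lt
  have cast_inj {x y : ℕ} (hx : x < r) (hy : y < r) (h : (x : ZMod D) = y) : x = y := by
    have : r ≤ D := by nlinarith
    rw [← ZMod.val_cast_of_lt (hx.trans_le this), h, ZMod.val_cast_of_lt (hy.trans_le this)]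
  calc r ^ (s + 1) = #(range r ×ˢ Fintype.piFinset fun _ : Fin s => range r) := by
        simp [pow_succ']
    _ ≤ #(innerCubes D s H) := by
      refine card_le_card_of_injOn (fun q => ((q.1 : ZMod D), fun j => (q.2 j : ZMod D)))
        (fun q hq => mem_coe.2 (mem_innerCubes.2 (height hq))) fun q hq q' hq' h => ?_
      simp only [coe_product, Set.mem_prod, mem_coe, mem_range, Fintype.mem_piFinset] at hq hq'
      obtain ⟨h₁, h₂⟩ := Prod.ext_iff.1 h
      exact Prod.ext (cast_inj hq.1 hq'.1 h₁)
        (funext fun j => cast_inj (hq.2 j) (hq'.2 j) (congrFun h₂ j))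

lemma div_pow_le_card_innerCubes (hD : H ≤ D) :
    (H / (s + 1) : ℝ) ^ (s + 1) ≤ #(innerCubes D s H) := by
  have upper : (s + 1) * ((H + s) / (s + 1)) < H + s + 1 := Nat.lt_succ_of_le (Nat.mul_div_le _ _)
  have lower : H ≤ (H + s) / (s + 1) * (s + 1) := by
    have := Nat.lt_mul_div_succ (H + s) s.succ_pos
    rw [mul_comm]
    lia
  calc (H / (s + 1) : ℝ) ^ (s + 1) ≤ (((H + s) / (s + 1) : ℕ) : ℝ) ^ (s + 1) := by
        gcongr
        rw [div_le_iff₀ (by positivity)]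
        exact_mod_cast lower
    _ ≤ #(innerCubes D s H) := by exact_mod_cast pow_le_card_innerCubes upper hD

end Translation

end InnerCubes

section ShortIntervals

variable {s H : ℕ}

lemma innerCubes_nonempty {D : ℕ} [NeZero D] (hH : 0 < H) : (innerCubes D s H).Nonempty :=
  ⟨0, mem_innerCubes.2 fun ε => by simpa [cubeHeight, cubePoint, vertexSum, cubeVertex] using hH⟩

lemma UsShort_nonneg (s H : ℕ) (b : ℕ → ℂ) : 0 ≤ UsShort s H b :=
  div_nonneg (gowersNorm_nonneg _ _ _) (gowersNorm_nonneg _ _ _)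

lemma UsShort_pow_eq_expect_innerCubes [NeZero H] (hs : 1 ≤ s) (b : ℕ → ℂ) :
    UsShort s H b ^ 2 ^ s =
      𝔼 p ∈ innerCubes (2 * H) s H, (cubeConjProd fun ε => b (cubeHeight p ε + 1)).re := by
  obtain ⟨t, rfl⟩ := Nat.exists_eq_add_of_le' hs
  have nonempty : (innerCubes (2 * H) (t + 1) H).Nonempty := innerCubes_nonempty (NeZero.pos H)
  have density_ne_zero : (#(innerCubes (2 * H) (t + 1) H) /
      Fintype.card (ZMod (2 * H) × (Fin (t + 1) → ZMod (2 * H))) : ℝ) ≠ 0 := by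
    have := nonempty.card_ne_zero
    positivity
  have cubeConjProd_one : cubeConjProd (fun _ : Fin (t + 1) → Bool => 1) = 1 := by
    simp [cubeConjProd]
  have gowersNorm_pow (b : ℕ → ℂ) : gowersNorm (2 * H) (t + 1) (truncSeq b H) ^ 2 ^ (t + 1) =
      #(innerCubes (2 * H) (t + 1) H) / Fintype.card (ZMod (2 * H) × (Fin (t + 1) → ZMod (2 * H))) *
        𝔼 p ∈ innerCubes (2 * H) (t + 1) H,
          (cubeConjProd fun ε => b (cubeHeight p ε + 1)).re := by
    rw [gowersNorm_pow_eq_re_gowersMean, gowersMean_truncSeq, ← Complex.re_expect,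
      ← Complex.re_ofReal_mul]
    push_cast
    rfl
  rw [UsShort, div_pow, gowersNorm_pow, gowersNorm_pow, mul_div_mul_left _ _ density_ne_zero]
  simp only [cubeConjProd_one, Complex.one_re, expect_const nonempty, div_one]

lemma card_escaping_div_card_innerCubes_le [NeZero H] {L : ℕ} (hL : s * L ≤ H) {y y' : Fin s → ℕ}
    (hy : ∀ j, y j ≤ L) (hy' : ∀ j, y' j ≤ L) :
    (#{p ∈ innerCubes (2 * H) s H | p + spannedCube (2 * H) y y' ∉ innerCubes (2 * H) s H} /
      #(innerCubes (2 * H) s H) : ℝ) ≤ 4 ^ s * (s * L) * (s + 1) ^ (s + 1) / H := by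
  have : (0 : ℝ) < H := by exact_mod_cast NeZero.pos H
  have escaping : (#{p ∈ innerCubes (2 * H) s H |
      p + spannedCube (2 * H) y y' ∉ innerCubes (2 * H) s H} : ℝ) ≤
        2 ^ s * (s * L * (2 * H) ^ s) := by
    exact_mod_cast card_escaping_le (by lia) hy hy'
  calc _ ≤ (2 ^ s * (s * L * (2 * H) ^ s)) / (H / (s + 1) : ℝ) ^ (s + 1) := by
        gcongr
        exact div_pow_le_card_innerCubes (by lia)
    _ = 4 ^ s * (s * L) * (s + 1) ^ (s + 1) / H := by
        rw [show (4 : ℝ) = 2 * 2 by norm_num, mul_pow, mul_pow, div_pow]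
        field_simp
        ring

namespace IsCubeCorrelation

variable {v : ((Fin s → Bool) → ℕ) → ℝ}

theorem expect_innerCubes_le (hv : IsCubeCorrelation v) [NeZero H] {L : ℕ} (hL : 0 < L)
    (hLH : s * L ≤ H) :
    𝔼 p ∈ innerCubes (2 * H) s H, v (cubeHeight p) ≤
      boxMean v L 0 + 2 * (4 ^ s * (s * L) * (s + 1) ^ (s + 1) / H) := by
  have nonempty : (innerCubes (2 * H) s H).Nonempty := innerCubes_nonempty (NeZero.pos H)
  have averaged : 𝔼 p ∈ innerCubes (2 * H) s H, v (cubeHeight p) -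
      2 * (4 ^ s * (s * L) * (s + 1) ^ (s + 1) / H) ≤
        𝔼 y ∈ grid s L, 𝔼 y' ∈ grid s L, 𝔼 p ∈ innerCubes (2 * H) s H,
          v (cubeHeight p + vertexSum y y') := by
    refine le_expect (grid_nonempty hL) fun y hy => le_expect (grid_nonempty hL) fun y' hy' => ?_
    have hy_le (j) := (mem_Icc.1 (Fintype.mem_piFinset.1 hy j)).2
    have hy'_le (j) := (mem_Icc.1 (Fintype.mem_piFinset.1 hy' j)).2
    have translated := abs_expect_comp_sub_expect_le (innerCubes (2 * H) s H)
      (G := fun p => v (cubeHeight p)) (add_left_injective (spannedCube (2 * H) y y'))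
      fun p => hv.abs_le_one _
    rw [expect_congr rfl fun p hp => congrArg v (cubeHeight_add_spannedCube
      (by lia) hy_le hy'_le hp)] at translated
    linarith [(abs_le.1 translated).1, card_escaping_div_card_innerCubes_le hLH hy_le hy'_le]
  have bounded : 𝔼 y ∈ grid s L, 𝔼 y' ∈ grid s L, 𝔼 p ∈ innerCubes (2 * H) s H,
      v (cubeHeight p + vertexSum y y') ≤ boxMean v L 0 := by
    simp only [expect_comm (grid s L) (innerCubes (2 * H) s H)]
    exact expect_le nonempty fun p _ => hv.boxMean_le L _
  linarith

end IsCubeCorrelation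

variable {I : ℕ → Finset ℕ} {a : ℕ → ℂ} {v : ((Fin s → Bool) → ℕ) → ℝ}

lemma tendsto_logMean_UsShort_pow [NeZero H] (hs : 1 ≤ s) (hv : IsCubeCorrelation v)
    (hav : ∀ k, Tendsto (fun N => logMean (I N) fun n => (cubeConjProd fun ε => a (n + k ε)).re)
      atTop (𝓝 (v k))) :
    Tendsto (fun N => logMean (I N) fun n => UsShort s H (fun m => a (n + m)) ^ 2 ^ s) atTop
      (𝓝 (𝔼 p ∈ innerCubes (2 * H) s H, v (cubeHeight p))) := by
  have shifted (k) : Tendsto (fun N => logMean (I N) fun n =>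
      (cubeConjProd fun ε => a (n + (k ε + 1))).re) atTop (𝓝 (v k)) := by
    have limit := hav (k + fun _ => 1)
    rw [hv.add_const k 1] at limit
    exact limit
  simp only [UsShort_pow_eq_expect_innerCubes hs]
  exact tendsto_logMean_expect fun p _ => shifted (cubeHeight p)

theorem eventually_logMean_UsShort_le (hI : AsymptoticallyShiftInvariant I)
    (ha : ∀ n, ‖a n‖ ≤ 1) (hs : 1 ≤ s)
    (hav : ∀ k, Tendsto (fun N => logMean (I N) fun n => (cubeConjProd fun ε => a (n + k ε)).re)
      atTop (𝓝 (v k))) {u : ℝ} (hu : 0 ≤ u)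
    (hlim : Tendsto (fun H : ℕ => 𝔼 h ∈ grid s H, v fun ε => epsDot ε h) atTop (𝓝 (u ^ 2 ^ s)))
    {η : ℝ} (hη : 0 < η) :
    ∀ᶠ H in atTop, ∀ᶠ N in atTop,
      logMean (I N) (fun n => UsShort s H fun m => a (n + m)) ≤ u + η := by
  have hv := isCubeCorrelation_of_tendsto hI ha hav
  have gap : 0 < (u + η) ^ 2 ^ s - u ^ 2 ^ s := by
    rw [sub_pos]
    gcongr
    linarith
  obtain ⟨L, hL, boxMean_le⟩ := hv.exists_boxMean_le hlim (half_pos gap)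
  have escape_tendsto : Tendsto (fun H : ℕ => 2 * (4 ^ s * (s * L) * (s + 1) ^ (s + 1) / H : ℝ))
      atTop (𝓝 0) := by
    simpa using (tendsto_const_div_atTop_nhds_zero_nat (_ : ℝ)).const_mul 2
  filter_upwards [eventually_gt_atTop 0, eventually_ge_atTop (s * L),
    escape_tendsto.eventually_lt_const (half_pos gap)] with H hH hLH escape_lt
  have : NeZero H := ⟨hH.ne'⟩
  have limit_lt : 𝔼 p ∈ innerCubes (2 * H) s H, v (cubeHeight p) < (u + η) ^ 2 ^ s := by
    linarith [hv.expect_innerCubes_le hL hLH]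
  filter_upwards [(tendsto_logMean_UsShort_pow hs hv hav).eventually_lt_const limit_lt] with N hN
  refine le_of_pow_le_pow_left₀ (by positivity) (by positivity)
    ((logMean_pow_le _ (fun n => UsShort_nonneg s H _) (by positivity)).trans hN.le)

end ShortIntervals

section StarSeminorm

variable {s : ℕ} {I : ℕ → Finset ℕ} {a : ℕ → ℂ}

lemma limsup_limsup_le_of_forall_eventually_le_add {f : ℕ → ℕ → ℝ} (hf : ∀ H N, 0 ≤ f H N) {c : ℝ}
    (h : ∀ η, 0 < η → ∀ᶠ H in atTop, ∀ᶠ N in atTop, f H N ≤ c + η) :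
    limsup (fun H => limsup (f H) atTop) atTop ≤ c := by
  refine le_of_forall_pos_le_add fun η hη => ?_
  have inner_le : ∀ᶠ H in atTop, limsup (f H) atTop ≤ c + η := by
    filter_upwards [h η hη] with H hH
    exact limsup_le_of_le (.of_frequently_ge (.of_forall (hf H))) hH
  have inner_nonneg : ∀ᶠ H in atTop, 0 ≤ limsup (f H) atTop := by
    filter_upwards [h η hη] with H hH
    exact le_limsup_of_frequently_le (.of_forall (hf H)) ⟨c + η, eventually_map.2 hH⟩
  exact limsup_le_of_le (.of_frequently_ge inner_nonneg.frequently) inner_le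

lemma cubeProd_eq_cubeConjProd (a : ℕ → ℂ) (h : Fin s → ℕ) (n : ℕ) :
    cubeProd a h n = cubeConjProd fun ε => a (n + epsDot ε h) :=
  prod_congr rfl fun ε _ => by
    unfold parityConj
    split_ifs <;> rfl

lemma exists_tendsto_logAvg_cubeConjProd
    (hcorr : ∀ (k : ℕ) (sh : Fin k → ℕ) (cj : Fin k → Bool),
      ∃ L : ℂ, Tendsto (logAvg I fun m => ∏ j,
        if cj j then conj (a (m + sh j)) else a (m + sh j)) atTop (𝓝 L))
    (k : (Fin s → Bool) → ℕ) :
    ∃ V, Tendsto (logAvg I fun n => cubeConjProd fun ε => a (n + k ε)) atTop (𝓝 V) := by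
  let enum := (Fintype.equivFin (Fin s → Bool)).symm
  obtain ⟨V, hV⟩ := hcorr _ (k ∘ enum)
    fun i => decide ((univ.filter fun j => enum i j = true).card % 2 = 1)
  refine ⟨V, hV.congr fun N => ?_⟩
  congr 1
  funext n
  rw [cubeConjProd, ← enum.prod_comp]
  refine prod_congr rfl fun i _ => ?_
  unfold parityConj
  split_ifs <;> simp_all

lemma tendsto_logMean_re_of_tendsto_logAvg {f : ℕ → ℂ} {V : ℂ}
    (h : Tendsto (logAvg I f) atTop (𝓝 V)) :
    Tendsto (fun N => logMean (I N) fun n => (f n).re) atTop (𝓝 V.re) := by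
  simpa only [Function.comp_def, re_logAvg] using (Complex.continuous_re.tendsto V).comp h

theorem star_log_seminorm_le_four_mul_log_uniformity_seminorm_general
    (hI : AsymptoticallyShiftInvariant I) (ha : ∀ n, ‖a n‖ ≤ 1) (hs : 1 ≤ s)
    (hcorr : ∀ k : (Fin s → Bool) → ℕ,
      ∃ V, Tendsto (logAvg I fun n => cubeConjProd fun ε => a (n + k ε)) atTop (𝓝 V))
    {u : ℝ} (hu : 0 ≤ u) {c : (Fin s → ℕ) → ℂ}
    (hc : ∀ h : Fin s → ℕ, Tendsto (logAvg I (cubeProd a h)) atTop (𝓝 (c h)))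
    (hlim : Tendsto (fun H : ℕ => ((H : ℂ) ^ s)⁻¹ * ∑ h ∈ grid s H, c h) atTop
      (𝓝 ((u : ℂ) ^ 2 ^ s))) :
    limsup (fun H => limsup (fun N => logMean (I N) fun n => UsShort s H fun m => a (n + m)) atTop)
      atTop ≤ u := by
  choose V hV using hcorr
  have c_eq (h : Fin s → ℕ) : c h = V fun ε => epsDot ε h := by
    refine tendsto_nhds_unique (hc h) ?_
    simpa only [← cubeProd_eq_cubeConjProd] using hV fun ε => epsDot ε h
  have re_limit : Tendsto (fun H : ℕ => 𝔼 h ∈ grid s H, (V fun ε => epsDot ε h).re) atTop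
      (𝓝 (u ^ 2 ^ s)) := by
    have real_part := (Complex.continuous_re.tendsto _).comp hlim
    rw [← Complex.ofReal_pow, Complex.ofReal_re] at real_part
    refine real_part.congr fun H => ?_
    rw [← Complex.re_expect, expect_eq_sum_div_card]
    simp [c_eq, div_eq_inv_mul]
  exact limsup_limsup_le_of_forall_eventually_le_add
    (fun H N => logMean_nonneg _ fun n => UsShort_nonneg s H _)
    fun η hη => eventually_logMean_UsShort_le hI ha hs
      (fun k => tendsto_logMean_re_of_tendsto_logAvg (hV k)) hu re_limit hη

end StarSeminorm

/-- Proposition 2.5 of the paper (logarithmic case): if `a` is bounded by `1` and admits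
correlations for logarithmic averages on intervals `I` with `|I_N| → ∞`, then
`‖a‖_{U^s_{*,log}(I)} ≤ 4 ‖a‖_{U^s_{log}(I)}`. The seminorm `u = ‖a‖_{U^s_{log}(I)}` is
characterized by `u^{2^s} = lim_{H} 𝔼_{h∈[H]^s} (lim_N 𝔼^{log}_{n∈I_N} ∏_ε C^{|ε|} a(n+ε·h))`,
and the star seminorm is `limsup_H limsup_N 𝔼^{log}_{n∈I_N} ‖S_n a‖_{U^s[H]}`. -/
theorem star_log_seminorm_le_four_mul_log_uniformity_seminorm
    (lo hi : ℕ → ℕ) (I : ℕ → Finset ℕ)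
    (hI : ∀ N, I N = Finset.Icc (lo N) (hi N))
    (hlo : ∀ N, 1 ≤ lo N)
    (hIcard : Tendsto (fun N => (I N).card) atTop atTop)
    (a : ℕ → ℂ) (ha : ∀ n, ‖a n‖ ≤ 1)
    (s : ℕ) (hs : 1 ≤ s)
    (hcorr : ∀ (k : ℕ) (sh : Fin k → ℕ) (cj : Fin k → Bool),
      ∃ L : ℂ, Tendsto (logAvg I fun m => ∏ j,
        if cj j then (starRingEnd ℂ) (a (m + sh j)) else a (m + sh j)) atTop (𝓝 L))
    (u : ℝ) (hu : 0 ≤ u)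
    (c : (Fin s → ℕ) → ℂ)
    (hc : ∀ h : Fin s → ℕ, Tendsto (logAvg I (cubeProd a h)) atTop (𝓝 (c h)))
    (hlim : Tendsto (fun H : ℕ => ((H : ℂ) ^ s)⁻¹ *
        ∑ h ∈ Fintype.piFinset (fun _ : Fin s => Finset.Icc 1 H), c h) atTop
        (𝓝 ((u : ℂ) ^ (2 ^ s)))) :
    limsup (fun H : ℕ => limsup (fun N : ℕ =>
        (∑ n ∈ I N, (n : ℝ)⁻¹)⁻¹ *
          ∑ n ∈ I N, (n : ℝ)⁻¹ * UsShort s H (fun m => a (n + m))) atTop) atTop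
      ≤ 4 * u := by
  obtain rfl := funext hI
  refine le_trans ?_ (by linarith : u ≤ 4 * u)
  simpa only [logMean_apply] using star_log_seminorm_le_four_mul_log_uniformity_seminorm_general
    (asymptoticallyShiftInvariant_Icc hlo hIcard) ha hs (exists_tendsto_logAvg_cubeConjProd hcorr)
    hu hc hlim
end

section
/- For any bounded sequence a : ℕ → ℂ and any sequence of intervals I = (I_N) with |I_N| → ∞, there exists a probability measure-preserving system (X, 𝒳, μ, T) and F ∈ L^∞(μ), together with a subsequence I' of I along which all correlations of a exist, such that for all s ∈ ℕ, n₁,…,n_s ∈ ℕ, and choices a_j ∈ {a, conj(a)} with corresponding F_j ∈ {F, conj(F)}, one has lim 𝔼_{m∈I'} a₁(m+n₁)⋯a_s(m+n_s) = ∫ T^{n₁}F₁ ⋯ T^{n_s}F_s dμ. -/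
open Filter Topology MeasureTheory

/-!
Let `K` be a compact metrizable space containing the values of `a`, and regard `a` as a point of the
one-sided shift space `ℕ → K`. The empirical measures of its shift orbit over the sets `I_N` live in
the weak-* compact space of probability measures, so they converge along a subsequence. The limit is
shift-invariant because `I_N + 1` differs from `I_N` by a vanishing proportion, and a correlation of
`a` is the integral of a continuous function, a product of coordinates and their conjugates, against
an empirical measure.
-/

open scoped symmDiff BoundedContinuousFunction

section Foelner

variable {ι E : Type*} [SeminormedAddCommGroup E]

theorem norm_sum_sub_sum_le_card_symmDiff_mul [DecidableEq ι] (s t : Finset ι) {g : ι → E} {B : ℝ}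
    (hg : ∀ i, ‖g i‖ ≤ B) :
    ‖∑ i ∈ s, g i - ∑ i ∈ t, g i‖ ≤ (s ∆ t).card * B := by
  have hcard : ((s ∆ t).card : ℝ) = (s \ t).card + (t \ s).card := by
    rw [symmDiff_def, Finset.sup_eq_union, Finset.card_union_of_disjoint disjoint_sdiff_sdiff,
      Nat.cast_add]
  calc ‖∑ i ∈ s, g i - ∑ i ∈ t, g i‖
      = ‖∑ i ∈ s \ t, g i - ∑ i ∈ t \ s, g i‖ := by rw [Finset.sum_sdiff_sub_sum_sdiff]
    _ ≤ ‖∑ i ∈ s \ t, g i‖ + ‖∑ i ∈ t \ s, g i‖ := norm_sub_le _ _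
    _ ≤ (s \ t).card * B + (t \ s).card * B := by
      gcongr <;> simpa using norm_sum_le_of_le _ fun i _ => hg i
    _ = (s ∆ t).card * B := by rw [hcard, add_mul]

/-- Finite sets `I i ⊆ ℕ` form a Følner family along `l` if `I i + 1` differs from `I i` by a
proportion tending to `0`. Mathlib's `IsAddFoelner` concerns actions of groups and so does not apply
to translation on `ℕ`. Nonemptiness is a separate field because the proportion is `0 / 0 = 0` for
empty sets. -/
structure IsNatFoelner (l : Filter ι) (I : ι → Finset ℕ) : Prop where
  eventually_nonempty : ∀ᶠ i in l, (I i).Nonempty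
  tendsto_card_symmDiff_div_card :
    Tendsto (fun i => (((I i).map (addRightEmbedding 1) ∆ I i).card : ℝ) / (I i).card) l (𝓝 0)

namespace IsNatFoelner

variable {l : Filter ι} {I : ι → Finset ℕ}

theorem comp_tendsto {κ : Type*} {k : Filter κ} {φ : κ → ι} (hI : IsNatFoelner l I)
    (hφ : Tendsto φ k l) : IsNatFoelner k (I ∘ φ) where
  eventually_nonempty := hφ.eventually hI.eventually_nonempty
  tendsto_card_symmDiff_div_card := hI.tendsto_card_symmDiff_div_card.comp hφ

theorem tendsto_average_succ_sub_average [NormedSpace ℝ E] (hI : IsNatFoelner l I) {g : ℕ → E}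
    {B : ℝ} (hg : ∀ n, ‖g n‖ ≤ B) :
    Tendsto (fun i => ((I i).card : ℝ)⁻¹ • ∑ m ∈ I i, g (m + 1)
      - ((I i).card : ℝ)⁻¹ • ∑ m ∈ I i, g m) l (𝓝 0) := by
  refine squeeze_zero_norm (fun i => ?_)
    (by simpa using hI.tendsto_card_symmDiff_div_card.mul_const B)
  have hsum : ∑ m ∈ I i, g (m + 1) = ∑ m ∈ (I i).map (addRightEmbedding 1), g m := by
    simp
  rw [← smul_sub, norm_smul, norm_inv, Real.norm_natCast, hsum, div_mul_eq_mul_div, div_eq_inv_mul]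
  gcongr
  exact norm_sum_sub_sum_le_card_symmDiff_mul _ _ hg

end IsNatFoelner

theorem card_map_succ_Icc_symmDiff_Icc_le (a b : ℕ) :
    ((Finset.Icc a b).map (addRightEmbedding 1) ∆ Finset.Icc a b).card ≤ 2 := by
  have hsubset : (Finset.Icc a b).map (addRightEmbedding 1) ∆ Finset.Icc a b ⊆ {a, b + 1} := by
    intro m hm
    simp only [Finset.map_add_right_Icc, Finset.mem_symmDiff, Finset.mem_Icc, Finset.mem_insert,
      Finset.mem_singleton] at hm ⊢
    omega
  exact (Finset.card_le_card hsubset).trans Finset.card_le_two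

theorem isNatFoelner_of_eq_Icc {l : Filter ι} {lo hi : ι → ℕ} {I : ι → Finset ℕ}
    (hI : ∀ i, I i = Finset.Icc (lo i) (hi i)) (hcard : Tendsto (fun i => (I i).card) l atTop) :
    IsNatFoelner l I where
  eventually_nonempty := (hcard.eventually_ge_atTop 1).mono fun _ => Finset.card_pos.1
  tendsto_card_symmDiff_div_card := by
    refine squeeze_zero (fun i => by positivity) (fun i => ?_)
      ((tendsto_natCast_atTop_atTop (R := ℝ).comp hcard).const_div_atTop 2)
    dsimp only [Function.comp_apply]
    gcongr
    exact_mod_cast hI i ▸ card_map_succ_Icc_symmDiff_Icc_le (lo i) (hi i)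

end Foelner

section EmpiricalMeasure

variable {ι X : Type*} [MeasurableSpace X]

/-- The empirical measure of the points `w i`, `i ∈ s`: the average of the Dirac masses at them,
with multiplicity. -/
noncomputable def empiricalMeasure (s : Finset ι) (hs : s.Nonempty) (w : ι → X) :
    ProbabilityMeasure X where
  val := (s.card : ENNReal)⁻¹ • ∑ i ∈ s, Measure.dirac (w i)
  property := ⟨by simp [ENNReal.inv_mul_cancel, hs.ne_empty]⟩

theorem integral_empiricalMeasure [MeasurableSingletonClass X] {E : Type*} [NormedAddCommGroup E]
    [NormedSpace ℝ E] [CompleteSpace E] (s : Finset ι) (hs : s.Nonempty) (w : ι → X) (f : X → E) :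
    ∫ x, f x ∂(empiricalMeasure s hs w : Measure X) = (s.card : ℝ)⁻¹ • ∑ i ∈ s, f (w i) := by
  have hint : ∀ i ∈ s, Integrable f (Measure.dirac (w i)) := fun i _ =>
    integrable_dirac enorm_lt_top
  simp [empiricalMeasure, integral_smul_measure, integral_finsetSum_measure hint]

end EmpiricalMeasure

section InvariantMeasure

variable {X : Type*} [TopologicalSpace X] [MeasurableSpace X] [BorelSpace X] {T : X → X}

theorem measurePreserving_of_tendsto_integral_comp_sub [HasOuterApproxClosed X] {ι : Type*}
    {l : Filter ι} [l.NeBot] {ν : ι → ProbabilityMeasure X} {μ : ProbabilityMeasure X}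
    (hν : Tendsto ν l (𝓝 μ)) (hT : Continuous T)
    (hinv : ∀ f : X →ᵇ ℝ, Tendsto (fun i => ∫ x, f (T x) ∂(ν i : Measure X)
      - ∫ x, f x ∂(ν i : Measure X)) l (𝓝 0)) :
    MeasurePreserving T (μ : Measure X) μ := by
  have := Measure.isProbabilityMeasure_map (μ := (μ : Measure X)) hT.aemeasurable
  refine ⟨hT.measurable, ext_of_forall_integral_eq_of_IsFiniteMeasure fun f => ?_⟩
  rw [integral_map hT.aemeasurable f.continuous.aestronglyMeasurable]
  have hlim := ProbabilityMeasure.tendsto_iff_forall_integral_tendsto.1 hν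
  have hdiff := (hlim (f.compContinuous ⟨T, hT⟩)).sub (hlim f)
  exact sub_eq_zero.1 (tendsto_nhds_unique hdiff (hinv f))

theorem exists_measurePreserving_tendsto_orbit_average [CompactSpace X] [T2Space X]
    [SecondCountableTopology X] (𝕜 : Type*) [RCLike 𝕜] (hT : Continuous T) (x : X)
    {I : ℕ → Finset ℕ} (hI : IsNatFoelner atTop I) :
    ∃ (μ : ProbabilityMeasure X) (φ : ℕ → ℕ), MeasurePreserving T (μ : Measure X) μ ∧
      StrictMono φ ∧ ∀ f : C(X, 𝕜), Tendsto
        (fun k => ((I (φ k)).card : 𝕜)⁻¹ * ∑ m ∈ I (φ k), f (T^[m] x)) atTop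
        (𝓝 (∫ y, f y ∂(μ : Measure X))) := by
  obtain ⟨ψ, hψ, hne⟩ := extraction_of_eventually_atTop hI.eventually_nonempty
  obtain ⟨μ, θ, hθ, hlim⟩ :=
    CompactSpace.tendsto_subseq fun k => empiricalMeasure (I (ψ k)) (hne k) (T^[·] x)
  have hφ : StrictMono (ψ ∘ θ) := hψ.comp hθ
  refine ⟨μ, ψ ∘ θ, measurePreserving_of_tendsto_integral_comp_sub hlim hT fun f => ?_, hφ,
    fun f => ?_⟩
  · simpa only [Function.comp_apply, integral_empiricalMeasure, Function.iterate_succ_apply'] using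
      (hI.comp_tendsto hφ.tendsto_atTop).tendsto_average_succ_sub_average
        fun m => f.norm_coe_le_norm (T^[m] x)
  · simpa [integral_empiricalMeasure, RCLike.real_smul_eq_coe_mul] using
      (ProbabilityMeasure.tendsto_iff_forall_integral_rclike_tendsto 𝕜).1 hlim
        (BoundedContinuousFunction.mkOfCompact f)

end InvariantMeasure

section Shift

variable {K : Type*}

/-- The one-sided shift on sequences, the transformation of the system built from a sequence. -/
def seqShift (x : ℕ → K) : ℕ → K := fun k => x (k + 1)

theorem seqShift_iterate_apply (n : ℕ) (x : ℕ → K) (k : ℕ) : seqShift^[n] x k = x (k + n) := by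
  induction n generalizing x with
  | zero => rfl
  | succ n ih => rw [Function.iterate_succ_apply, ih, seqShift, add_assoc]

theorem continuous_seqShift [TopologicalSpace K] : Continuous (seqShift : (ℕ → K) → ℕ → K) :=
  continuous_pi fun k => continuous_apply (k + 1)

theorem exists_measurePreserving_seqShift_tendsto_average [TopologicalSpace K] [CompactSpace K]
    [T2Space K] [SecondCountableTopology K] [MeasurableSpace K] [BorelSpace K] (𝕜 : Type*)
    [RCLike 𝕜] (a : ℕ → K) {I : ℕ → Finset ℕ} (hI : IsNatFoelner atTop I) :
    ∃ (μ : ProbabilityMeasure (ℕ → K)) (φ : ℕ → ℕ),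
      MeasurePreserving seqShift (μ : Measure (ℕ → K)) μ ∧ StrictMono φ ∧
      ∀ (s : ℕ) (n : Fin s → ℕ) (g : C(Fin s → K, 𝕜)), Tendsto
        (fun k => ((I (φ k)).card : 𝕜)⁻¹ * ∑ m ∈ I (φ k), g fun j => a (m + n j)) atTop
        (𝓝 (∫ x, g (fun j => seqShift^[n j] x 0) ∂(μ : Measure (ℕ → K)))) := by
  obtain ⟨μ, φ, hμ, hφ, hlim⟩ :=
    exists_measurePreserving_tendsto_orbit_average 𝕜 continuous_seqShift a hI
  refine ⟨μ, φ, hμ, hφ, fun s n g => ?_⟩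
  have hcoord : Continuous fun (x : ℕ → K) (j : Fin s) => x (n j) := by fun_prop
  simpa [seqShift_iterate_apply, add_comm] using hlim (g.comp ⟨_, hcoord⟩)

end Shift

theorem furstenberg_correspondence_general
    (a : ℕ → ℂ) (C : ℝ) (hC : ∀ n, ‖a n‖ ≤ C)
    (I : ℕ → Finset ℕ) (hI : IsNatFoelner atTop I) :
    ∃ (X : Type) (_ : MeasurableSpace X) (μ : Measure X) (T : X → X) (F : X → ℂ)
      (φ : ℕ → ℕ),
      IsProbabilityMeasure μ ∧
      MeasurePreserving T μ μ ∧
      Measurable F ∧ (∀ x, ‖F x‖ ≤ C) ∧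
      StrictMono φ ∧
      ∀ (s : ℕ) (n : Fin s → ℕ) (cj : Fin s → Bool),
        Tendsto (fun k => ((I (φ k)).card : ℂ)⁻¹ * ∑ m ∈ I (φ k),
            ∏ j, if cj j then (starRingEnd ℂ) (a (m + n j)) else a (m + n j)) atTop
          (𝓝 (∫ x, (∏ j, if cj j then (starRingEnd ℂ) (F (T^[n j] x))
              else F (T^[n j] x)) ∂μ)) := by
  let D := Metric.closedBall (0 : ℂ) C
  have : CompactSpace D := isCompact_iff_compactSpace.1 (isCompact_closedBall 0 C)
  let aD : ℕ → D := fun n => ⟨a n, mem_closedBall_zero_iff.2 (hC n)⟩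
  obtain ⟨μ, φ, hμ, hφ, hlim⟩ := exists_measurePreserving_seqShift_tendsto_average ℂ aD hI
  refine ⟨ℕ → D, inferInstance, μ, seqShift, fun x => x 0, φ, inferInstance, hμ, by fun_prop,
    fun x => mem_closedBall_zero_iff.1 (x 0).2, hφ, fun s n cj => ?_⟩
  have hcont : Continuous fun z : Fin s → D =>
      ∏ j, if cj j then (starRingEnd ℂ) (z j : ℂ) else (z j : ℂ) :=
    continuous_finsetProd _ fun j _ => by split_ifs <;> fun_prop
  exact hlim s n ⟨_, hcont⟩

/-- Furstenberg correspondence principle (Proposition 2.3 of the paper, in subsequential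
form): for any bounded sequence `a : ℕ → ℂ` and intervals `I_N` with `|I_N| → ∞`, there
exist a probability measure-preserving system `(X, μ, T)`, a bounded measurable function
`F`, and a subsequence along which all correlations of `a` exist and equal the
corresponding integrals `∫ T^{n₁}F₁ ⋯ T^{n_s}F_s dμ`. -/
theorem furstenberg_correspondence
    (a : ℕ → ℂ) (C : ℝ) (hC : ∀ n, ‖a n‖ ≤ C)
    (lo hi : ℕ → ℕ) (I : ℕ → Finset ℕ)
    (hI : ∀ N, I N = Finset.Icc (lo N) (hi N))
    (hIcard : Tendsto (fun N => (I N).card) atTop atTop) :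
    ∃ (X : Type) (_ : MeasurableSpace X) (μ : Measure X) (T : X → X) (F : X → ℂ)
      (φ : ℕ → ℕ),
      IsProbabilityMeasure μ ∧
      MeasurePreserving T μ μ ∧
      Measurable F ∧ (∀ x, ‖F x‖ ≤ C) ∧
      StrictMono φ ∧
      ∀ (s : ℕ) (n : Fin s → ℕ) (cj : Fin s → Bool),
        Tendsto (fun k => ((I (φ k)).card : ℂ)⁻¹ * ∑ m ∈ I (φ k),
            ∏ j, if cj j then (starRingEnd ℂ) (a (m + n j)) else a (m + n j)) atTop
          (𝓝 (∫ x, (∏ j, if cj j then (starRingEnd ℂ) (F (T^[n j] x))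
              else F (T^[n j] x)) ∂μ)) :=
  furstenberg_correspondence_general a C hC I (isNatFoelner_of_eq_Icc hI hIcard)
end

section
/- Let s ∈ ℕ and let a : ℕ → ℂ be bounded by 1 and admit correlations for Cesàro averages on a sequence of intervals I = (I_N) with |I_N| → ∞. For each N let (X_N, μ_N, T_N) be a measure-preserving system, F_{0,N}, F_{1,N},…,F_{s-1,N} ∈ L^∞(μ_N) bounded by 1, and k₁,…,k_{s-1} ∈ ℤ. Then limsup_{N→∞} |𝔼_{n∈I_N} a(n) ∫ F_{0,N}·T_N^{k₁n}F_{1,N}⋯T_N^{k_{s-1}n}F_{s-1,N} dμ_N| ≤ 4‖a‖_{U^s(I)}. -/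
open Filter Finset Topology MeasureTheory

/-- Cesàro average of `f` over the interval `I N`. -/
noncomputable def cesaroAvg (I : ℕ → Finset ℕ) (f : ℕ → ℂ) (N : ℕ) : ℂ :=
  ((I N).card : ℂ)⁻¹ * ∑ n ∈ I N, f n

/-!
Pass to an ultrafilter along which all Cesàro averages converge. Moving the first function out of
the integral by invariance of the measure and applying Cauchy–Schwarz and van der Corput with shifts
`i, j < l` removes one function and replaces `a` by `a(· + i) · conj a(· + j)`. After `s` steps the
`2^s`-th power of the correlation is bounded by `Q(l)`, the average of `a` over Gowers cubes whose
sides are distributed like `|i - j|`.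

The sides in the definition of the uniformity norm are uniform on `{1, …, h}` instead. In the GNS
space of the mean, where the shift is an isometry `S` with ergodic averages `A_n`, the averages of
`mean (a · conj a(· + d))` over `d` are `‖A_l v‖²` for the first law and `⟪v, S A_h v⟫` for the
second, and the parallelogram law gives `2 ‖A_k v‖² ≤ ⟪v, S A_h v⟫ + ‖A_l v‖² + o(1)` as `h → ∞` and
`k / h → ∞`. Iterating over the `s` directions yields
`2^s Q(k) ≤ R(h) + (2^s - 1) Q(l) + o(1)`, with `R` the averages for the uniform law, and taking
`l` to nearly minimise `Q` shows `inf Q ≤ lim R`.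
-/

open scoped InnerProductSpace ComplexOrder BoundedContinuousFunction

namespace AntiUniformity

section BirkhoffAverages

lemma norm_sq_le_norm_sq_add {E : Type*} [SeminormedAddCommGroup E] {x y : E}
    (hx : ‖x‖ ≤ 1) (hy : ‖y‖ ≤ 1) :
    ‖x‖ ^ 2 ≤ ‖y‖ ^ 2 + 2 * ‖x - y‖ := by
  have hxy : ‖x‖ - ‖y‖ ≤ ‖x - y‖ := norm_sub_norm_le x y
  nlinarith [norm_nonneg x, norm_nonneg y, norm_nonneg (x - y)]

variable {α E : Type*} {f : α → α} {n : ℕ} {x : α}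

lemma birkhoffAverage_comm [AddCommGroup E] [Module ℝ E] (f : α → α) (g : α → E) (m n : ℕ)
    (x : α) :
    birkhoffAverage ℝ f (birkhoffAverage ℝ f g m) n x =
      birkhoffAverage ℝ f (birkhoffAverage ℝ f g n) m x := by
  simp only [birkhoffAverage, birkhoffSum, ← smul_sum, ← Function.iterate_add_apply]
  rw [smul_comm, sum_comm]
  simp only [add_comm]

lemma birkhoffAverage_mem_of_convex [AddCommGroup E] [Module ℝ E] {g : α → E} {s : Set E}
    (hs : Convex ℝ s) (hn : n ≠ 0) (hg : ∀ i < n, g (f^[i] x) ∈ s) :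
    birkhoffAverage ℝ f g n x ∈ s := by
  rw [birkhoffAverage, birkhoffSum, smul_sum]
  exact hs.sum_mem (fun _ _ => by positivity) (by simp [hn]) fun i hi => hg i (mem_range.1 hi)

variable [SeminormedAddCommGroup E] [NormedSpace ℝ E] {g : α → E}

lemma norm_birkhoffAverage_sub_le {C : ℝ} {y : E} (hn : n ≠ 0)
    (hg : ∀ i < n, ‖g (f^[i] x) - y‖ ≤ C) : ‖birkhoffAverage ℝ f g n x - y‖ ≤ C := by
  simpa only [mem_closedBall_iff_norm] using
    birkhoffAverage_mem_of_convex (convex_closedBall y C) hn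
      fun i hi => mem_closedBall_iff_norm.2 (hg i hi)

lemma norm_birkhoffAverage_le_one (hg : ∀ i, ‖g (f^[i] x)‖ ≤ 1) :
    ‖birkhoffAverage ℝ f g n x‖ ≤ 1 := by
  rcases eq_or_ne n 0 with rfl | hn
  · simp
  · simpa only [sub_zero] using norm_birkhoffAverage_sub_le (y := (0 : E)) hn
      fun i _ => (sub_zero (g (f^[i] x))).symm ▸ hg i

lemma norm_birkhoffAverage_iterate_sub_le (hg : ∀ i, ‖g (f^[i] x)‖ ≤ 1) (k : ℕ) :
    ‖birkhoffAverage ℝ f g n (f^[k] x) - birkhoffAverage ℝ f g n x‖ ≤ 2 * k / n := by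
  induction k with
  | zero => simp
  | succ k ih =>
    have hstep : ‖birkhoffAverage ℝ f g n (f (f^[k] x)) - birkhoffAverage ℝ f g n (f^[k] x)‖
        ≤ 2 / n := by
      rw [birkhoffAverage_apply_sub_birkhoffAverage, ← Function.iterate_add_apply, norm_smul,
        norm_inv, Real.norm_natCast, inv_mul_eq_div]
      gcongr
      exact (norm_sub_le _ _).trans ((add_le_add (hg _) (hg _)).trans one_add_one_eq_two.le)
    rw [Function.iterate_succ_apply']
    refine (norm_sub_le_norm_sub_add_norm_sub _ _ _).trans ((add_le_add hstep ih).trans_eq ?_)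
    push_cast
    ring

lemma norm_birkhoffAverage_birkhoffAverage_sub_le {m : ℕ} (hg : ∀ i, ‖g (f^[i] x)‖ ≤ 1)
    (hm : m ≠ 0) :
    ‖birkhoffAverage ℝ f (birkhoffAverage ℝ f g m) n x - birkhoffAverage ℝ f g n x‖
      ≤ 2 * m / n := by
  rw [birkhoffAverage_comm]
  refine norm_birkhoffAverage_sub_le hm fun i hi => ?_
  refine (norm_birkhoffAverage_iterate_sub_le hg i).trans ?_
  gcongr

end BirkhoffAverages

section VanDerCorput

variable {α E : Type*} [SeminormedAddCommGroup E] [InnerProductSpace ℝ E]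
  {f : α → α} {g : α → E} {n m : ℕ} {x : α}

lemma norm_birkhoffAverage_sq_eq :
    ‖birkhoffAverage ℝ f g n x‖ ^ 2 =
      ((n : ℝ) ^ 2)⁻¹ * ∑ i ∈ range n, ∑ j ∈ range n, ⟪g (f^[i] x), g (f^[j] x)⟫_ℝ := by
  simp only [← real_inner_self_eq_norm_sq, birkhoffAverage, birkhoffSum, inner_smul_left,
    inner_smul_right, sum_inner, inner_sum, conj_trivial]
  rw [← mul_sum, ← mul_assoc, sq, mul_inv, sum_comm]

lemma norm_birkhoffAverage_sq_le (hn : n ≠ 0) :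
    ‖birkhoffAverage ℝ f g n x‖ ^ 2 ≤ birkhoffAverage ℝ f (fun y => ‖g y‖ ^ 2) n x := by
  have hconvex : ConvexOn ℝ Set.univ fun v : E => ‖v‖ ^ 2 :=
    convexOn_univ_norm.pow (fun _ _ => norm_nonneg _) 2
  simp only [birkhoffAverage, birkhoffSum, smul_sum]
  exact hconvex.map_sum_le (fun _ _ => by positivity) (by simp [hn]) fun _ _ => Set.mem_univ _

theorem van_der_corput (hg : ∀ i, ‖g (f^[i] x)‖ ≤ 1) (hn : n ≠ 0) (hm : m ≠ 0) :
    ‖birkhoffAverage ℝ f g n x‖ ^ 2 ≤ ((m : ℝ) ^ 2)⁻¹ * ∑ i ∈ range m, ∑ j ∈ range m,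
      birkhoffAverage ℝ f (fun y => ⟪g (f^[i] y), g (f^[j] y)⟫_ℝ) n x + 4 * m / n := by
  have hsmooth : ∀ k, ‖birkhoffAverage ℝ f g m (f^[k] x)‖ ≤ 1 := fun k =>
    norm_birkhoffAverage_le_one fun i => by
      simpa only [← Function.iterate_add_apply] using hg (i + k)
  calc ‖birkhoffAverage ℝ f g n x‖ ^ 2
      ≤ ‖birkhoffAverage ℝ f (birkhoffAverage ℝ f g m) n x‖ ^ 2 + 2 * (2 * m / n) := by
        refine (norm_sq_le_norm_sq_add (norm_birkhoffAverage_le_one hg)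
          (norm_birkhoffAverage_le_one (n := n) hsmooth)).trans ?_
        rw [norm_sub_rev]
        gcongr
        exact norm_birkhoffAverage_birkhoffAverage_sub_le hg hm
    _ ≤ birkhoffAverage ℝ f (fun y => ‖birkhoffAverage ℝ f g m y‖ ^ 2) n x + 2 * (2 * m / n) := by
        gcongr
        exact norm_birkhoffAverage_sq_le hn
    _ = _ := by
        simp only [norm_birkhoffAverage_sq_eq]
        simp only [birkhoffAverage, birkhoffSum, smul_eq_mul, ← mul_sum]
        rw [sum_comm, mul_left_comm]
        simp only [sum_comm (s := range n)]
        ring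

end VanDerCorput

section Isometry

variable {E : Type*} [SeminormedAddCommGroup E] [InnerProductSpace ℝ E] (S : E →ₗᵢ[ℝ] E)

/-- The ergodic average `n⁻¹ ∑_{k < n} S^k` of a linear isometry, as a linear map. -/
noncomputable def isometryAverage (n : ℕ) : E →ₗ[ℝ] E :=
  (n : ℝ)⁻¹ • ∑ k ∈ range n, S.toLinearMap ^ k

variable {x : E} {l : ℕ}

lemma isometryAverage_apply (n : ℕ) (x : E) :
    isometryAverage S n x = birkhoffAverage ℝ S id n x := by
  simp [isometryAverage, birkhoffAverage, birkhoffSum, Module.End.pow_apply]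

lemma inner_iterate_map_map (i : ℕ) (x y : E) : ⟪S^[i] x, S^[i] y⟫_ℝ = ⟪x, y⟫_ℝ := by
  simpa only [LinearIsometry.coe_pow] using (S ^ i).inner_map_map x y

lemma norm_iterate_map (i : ℕ) (x : E) : ‖S^[i] x‖ = ‖x‖ := by
  simpa only [LinearIsometry.coe_pow] using (S ^ i).norm_map x

lemma norm_isometryAverage_le (n : ℕ) (x : E) : ‖isometryAverage S n x‖ ≤ ‖x‖ := by
  rcases eq_or_ne n 0 with rfl | hn
  · simp [isometryAverage]
  · rw [isometryAverage_apply S, ← sub_zero (birkhoffAverage ..)]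
    exact norm_birkhoffAverage_sub_le hn fun i _ => by simp [norm_iterate_map]

lemma inner_iterate_iterate (x : E) (i j : ℕ) :
    ⟪S^[i] x, S^[j] x⟫_ℝ = ⟪x, S^[Nat.dist i j] x⟫_ℝ := by
  wlog hij : i ≤ j generalizing i j
  · rw [real_inner_comm, this j i (le_of_not_ge hij), Nat.dist_comm]
  rw [Nat.dist_eq_sub_of_le hij, ← inner_iterate_map_map S i x,
    ← Function.iterate_add_apply S i (j - i), Nat.add_sub_cancel' hij]

lemma norm_isometryAverage_sq_eq (n : ℕ) (x : E) :
    ‖isometryAverage S n x‖ ^ 2 =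
      ((n : ℝ) ^ 2)⁻¹ * ∑ i ∈ range n, ∑ j ∈ range n, ⟪x, S^[Nat.dist i j] x⟫_ℝ := by
  simp only [isometryAverage_apply S, norm_birkhoffAverage_sq_eq, id, inner_iterate_iterate]

lemma inner_map_isometryAverage (n : ℕ) (x : E) :
    ⟪x, S (isometryAverage S n x)⟫_ℝ = (n : ℝ)⁻¹ * ∑ d ∈ Icc 1 n, ⟪x, S^[d] x⟫_ℝ := by
  simp only [isometryAverage_apply S, birkhoffAverage, birkhoffSum, id, map_smul, map_sum,
    inner_smul_right, inner_sum, ← Function.iterate_succ_apply']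
  rw [range_eq_Ico, sum_Ico_add' (fun d => ⟪x, S^[d] x⟫_ℝ) 0 n 1]
  rfl

lemma iterate_isometryAverage (i n : ℕ) (x : E) :
    S^[i] (isometryAverage S n x) = isometryAverage S n (S^[i] x) := by
  simp only [isometryAverage_apply S, birkhoffAverage, birkhoffSum, id, ← LinearIsometry.coe_pow,
    map_smul, map_sum]
  simp only [LinearIsometry.coe_pow, ← Function.iterate_add_apply, add_comm]

lemma norm_isometryAverage_iterate_sub_le (hx : ‖x‖ ≤ 1) (i n : ℕ) :
    ‖isometryAverage S n (S^[i] x) - isometryAverage S n x‖ ≤ 2 * i / n := by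
  simpa only [isometryAverage_apply S] using
    norm_birkhoffAverage_iterate_sub_le (fun j => (norm_iterate_map S j x).trans_le hx) i

lemma norm_isometryAverage_isometryAverage_sub_le (hx : ‖x‖ ≤ 1) (hl : l ≠ 0) (n : ℕ) :
    ‖isometryAverage S n (isometryAverage S l x) - isometryAverage S n x‖ ≤ 2 * l / n := by
  rw [isometryAverage_apply S l x, map_birkhoffAverage ℝ ℝ]
  refine norm_birkhoffAverage_sub_le hl fun i hi => ?_
  exact (norm_isometryAverage_iterate_sub_le S hx i n).trans (by gcongr)

lemma norm_map_isometryAverage_le (hx : ‖x‖ ≤ 1) (hl : l ≠ 0) (n : ℕ) :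
    ‖S (isometryAverage S n x)‖ ≤ ‖isometryAverage S l x‖ + 2 * l / n := by
  have hsmooth := norm_isometryAverage_isometryAverage_sub_le S hx hl n
  calc ‖S (isometryAverage S n x)‖ = ‖isometryAverage S n x‖ := S.norm_map _
    _ ≤ ‖isometryAverage S n (isometryAverage S l x)‖ + 2 * l / n := by
      linarith [norm_sub_norm_le (isometryAverage S n x)
        (isometryAverage S n (isometryAverage S l x)), norm_sub_rev (isometryAverage S n x)
        (isometryAverage S n (isometryAverage S l x))]
    _ ≤ _ := by gcongr; exact norm_isometryAverage_le S n _

lemma abs_inner_isometryAverage_sub_le (hx : ‖x‖ ≤ 1) (hl : l ≠ 0) (n : ℕ) :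
    |⟪isometryAverage S l x, S (isometryAverage S n x)⟫_ℝ - ⟪x, S (isometryAverage S n x)⟫_ℝ|
      ≤ 2 * l / n := by
  set v := S (isometryAverage S n x) with hv
  have hlinear : ⟪isometryAverage S l x, v⟫_ℝ = birkhoffAverage ℝ S (fun y => ⟪y, v⟫_ℝ) l x := by
    rw [isometryAverage_apply S, real_inner_comm]
    simpa only [Function.comp_def, innerₗ_apply_apply, real_inner_comm, id] using
      map_birkhoffAverage ℝ ℝ (innerₗ E v) S id l x
  rw [hlinear, ← Real.norm_eq_abs]
  refine norm_birkhoffAverage_sub_le hl fun i hi => ?_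
  rw [← inner_iterate_map_map S i x v, ← inner_sub_right, Real.norm_eq_abs]
  have hmove : ‖v - S^[i] v‖ ≤ 2 * i / n := by
    rw [norm_sub_rev, hv, ← Function.iterate_succ_apply, Function.iterate_succ_apply',
      ← map_sub, S.norm_map, iterate_isometryAverage S]
    exact norm_isometryAverage_iterate_sub_le S hx i n
  calc |⟪S^[i] x, v - S^[i] v⟫_ℝ| ≤ ‖S^[i] x‖ * ‖v - S^[i] v‖ := abs_real_inner_le_norm _ _
    _ ≤ 1 * (2 * i / n) := by
      gcongr
      exact (norm_iterate_map S i x).trans_le hx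
    _ ≤ 2 * l / n := by rw [one_mul]; gcongr

theorem inner_map_isometryAverage_le (hx : ‖x‖ ≤ 1) (hl : l ≠ 0) (h : ℕ) :
    ⟪x, S (isometryAverage S h x)⟫_ℝ ≤ ‖isometryAverage S l x‖ ^ 2 + 4 * l / h := by
  have hsmooth := abs_le.1 (abs_inner_isometryAverage_sub_le S hx hl h)
  have hnorm := norm_map_isometryAverage_le S hx hl h
  have hle : ‖isometryAverage S l x‖ ≤ 1 := (norm_isometryAverage_le S l x).trans hx
  have hcs := real_inner_le_norm (isometryAverage S l x) (S (isometryAverage S h x))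
  have : (4 : ℝ) * l / h = 2 * (2 * l / h) := by ring
  nlinarith [norm_nonneg (isometryAverage S l x)]

lemma norm_isometryAverage_map_isometryAverage_sub_le {h : ℕ} (hx : ‖x‖ ≤ 1) (hh : h ≠ 0) (n : ℕ) :
    ‖isometryAverage S n (S (isometryAverage S h x)) - isometryAverage S n x‖
      ≤ 2 * (h + 1) / n := by
  have hSx : ‖S x‖ ≤ 1 := (S.norm_map x).trans_le hx
  have hcomm : S (isometryAverage S h x) = isometryAverage S h (S x) :=
    iterate_isometryAverage S 1 h x
  have hsmooth := norm_isometryAverage_isometryAverage_sub_le S hSx hh n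
  have hshift : ‖isometryAverage S n (S x) - isometryAverage S n x‖ ≤ 2 * (1 : ℕ) / n :=
    norm_isometryAverage_iterate_sub_le S hx 1 n
  rw [hcomm]
  refine (norm_sub_le_norm_sub_add_norm_sub _ _ _).trans ((add_le_add hsmooth hshift).trans_eq ?_)
  push_cast
  ring

lemma norm_isometryAverage_sub_isometryAverage_midpoint_le {h : ℕ} (hx : ‖x‖ ≤ 1) (hl : l ≠ 0)
    (hh : h ≠ 0) (k : ℕ) :
    ‖isometryAverage S k x - isometryAverage S k
      ((2 : ℝ)⁻¹ • (isometryAverage S l x + S (isometryAverage S h x)))‖ ≤ (l + h + 1) / k := by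
  set v := isometryAverage S l x
  set w := S (isometryAverage S h x)
  have hsplit : isometryAverage S k x - isometryAverage S k ((2 : ℝ)⁻¹ • (v + w)) =
      -((2 : ℝ)⁻¹ • ((isometryAverage S k v - isometryAverage S k x) +
        (isometryAverage S k w - isometryAverage S k x))) := by
    rw [map_smul, map_add]
    module
  rw [hsplit, norm_neg, norm_smul, norm_inv, Real.norm_two]
  linear_combination 2⁻¹ * ((norm_add_le _ _).trans (add_le_add
    (norm_isometryAverage_isometryAverage_sub_le S hx hl k)
    (norm_isometryAverage_map_isometryAverage_sub_le S hx hh k)))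

-- The parallelogram law, applied to two vectors which the averages `isometryAverage S k` do not
-- distinguish from `x` as `k → ∞`.
theorem two_mul_norm_isometryAverage_sq_le {h : ℕ} (hx : ‖x‖ ≤ 1) (hl : l ≠ 0) (hh : h ≠ 0)
    (k : ℕ) :
    2 * ‖isometryAverage S k x‖ ^ 2 ≤ ⟪x, S (isometryAverage S h x)⟫_ℝ +
      ‖isometryAverage S l x‖ ^ 2 + (4 * l / h + 4 * (l + h + 1) / k) := by
  set v := isometryAverage S l x
  set w := S (isometryAverage S h x)
  have hv : ‖v‖ ≤ 1 := (norm_isometryAverage_le S l x).trans hx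
  have hw : ‖w‖ ≤ 1 := ((S.norm_map _).trans_le (norm_isometryAverage_le S h x)).trans hx
  set z := (2 : ℝ)⁻¹ • (v + w) with hz
  have hz_le : ‖z‖ ≤ 1 := by
    rw [hz, norm_smul, norm_inv, Real.norm_two]
    linarith [norm_add_le v w]
  have hz_sq : 4 * ‖z‖ ^ 2 = ‖v‖ ^ 2 + 2 * ⟪v, w⟫_ℝ + ‖w‖ ^ 2 := by
    rw [← norm_add_sq_real, hz, norm_smul, norm_inv, Real.norm_two]
    ring
  have hz_close : ‖isometryAverage S k x - isometryAverage S k z‖ ≤ (l + h + 1) / k :=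
    norm_isometryAverage_sub_isometryAverage_midpoint_le S hx hl hh k
  have hAz : ‖isometryAverage S k z‖ ≤ ‖z‖ := norm_isometryAverage_le S k z
  have hAx_sq := norm_sq_le_norm_sq_add ((norm_isometryAverage_le S k x).trans hx) (hAz.trans hz_le)
  have hAz_sq : ‖isometryAverage S k z‖ ^ 2 ≤ ‖z‖ ^ 2 := by gcongr
  have hw_sq : ‖w‖ ^ 2 ≤ ‖v‖ ^ 2 + 2 * (2 * l / h) := by
    have hwv : ‖w‖ ≤ ‖v‖ + 2 * l / h := norm_map_isometryAverage_le S hx hl h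
    have hδ : (0 : ℝ) ≤ 2 * l / h := by positivity
    nlinarith [norm_nonneg v, norm_nonneg w]
  have hinner : ⟪v, w⟫_ℝ - ⟪x, w⟫_ℝ ≤ 2 * l / h :=
    (abs_le.1 (abs_inner_isometryAverage_sub_le S hx hl h)).2
  have hδ : 4 * (l + h + 1 : ℝ) / k = 4 * ((l + h + 1) / k) := by ring
  have hδ' : 4 * (l : ℝ) / h = 2 * (2 * l / h) := by ring
  linarith

end Isometry

section Weights

open Finsupp (linearCombination)

/-- A finitely supported probability weight on `ℕ`; `linearCombination ℝ ψ w` is the corresponding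
weighted mean of `ψ : ℕ → ℝ`. -/
structure IsProbWeight (w : ℕ →₀ ℝ) : Prop where
  nonneg : ∀ d, 0 ≤ w d
  sum_eq_one : ∑ d ∈ w.support, w d = 1

lemma linearCombination_eq_sum (w : ℕ →₀ ℝ) (ψ : ℕ → ℝ) :
    linearCombination ℝ ψ w = ∑ d ∈ w.support, w d * ψ d := rfl

lemma linearCombination_fun_add (w : ℕ →₀ ℝ) (φ ψ : ℕ → ℝ) :
    linearCombination ℝ (fun d => φ d + ψ d) w =
      linearCombination ℝ φ w + linearCombination ℝ ψ w := by
  simp only [linearCombination_eq_sum, mul_add, sum_add_distrib]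

lemma linearCombination_fun_const_mul (w : ℕ →₀ ℝ) (c : ℝ) (ψ : ℕ → ℝ) :
    linearCombination ℝ (fun d => c * ψ d) w = c * linearCombination ℝ ψ w := by
  simp only [linearCombination_eq_sum, mul_sum, mul_left_comm]

lemma linearCombination_comm (v w : ℕ →₀ ℝ) (ψ : ℕ → ℕ → ℝ) :
    linearCombination ℝ (fun d => linearCombination ℝ (ψ d) w) v =
      linearCombination ℝ (fun e => linearCombination ℝ (fun d => ψ d e) v) w := by
  simp only [linearCombination_eq_sum, mul_sum]
  rw [sum_comm]
  simp only [mul_left_comm]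

namespace IsProbWeight

variable {w : ℕ →₀ ℝ} {φ ψ : ℕ → ℝ}

lemma linearCombination_mono (hw : IsProbWeight w) (h : ∀ d, φ d ≤ ψ d) :
    linearCombination ℝ φ w ≤ linearCombination ℝ ψ w :=
  sum_le_sum fun d _ => mul_le_mul_of_nonneg_left (h d) (hw.nonneg d)

lemma linearCombination_const (hw : IsProbWeight w) (c : ℝ) :
    linearCombination ℝ (fun _ => c) w = c := by
  rw [linearCombination_eq_sum, ← sum_mul, hw.sum_eq_one, one_mul]

end IsProbWeight

/-- The Fejér weight: the law of the distance between two independent uniform elements of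
`{0, …, n - 1}`. -/
noncomputable def fejerWeight (n : ℕ) : ℕ →₀ ℝ :=
  ∑ i ∈ range n, ∑ j ∈ range n, Finsupp.single (Nat.dist i j) ((n : ℝ) ^ 2)⁻¹

/-- The uniform weight on `{1, …, n}`. -/
noncomputable def uniformWeight (n : ℕ) : ℕ →₀ ℝ :=
  ∑ d ∈ Icc 1 n, Finsupp.single d (n : ℝ)⁻¹

lemma linearCombination_fejerWeight (n : ℕ) (ψ : ℕ → ℝ) :
    linearCombination ℝ ψ (fejerWeight n) =
      ((n : ℝ) ^ 2)⁻¹ * ∑ i ∈ range n, ∑ j ∈ range n, ψ (Nat.dist i j) := by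
  simp [fejerWeight, mul_sum]

lemma linearCombination_uniformWeight (n : ℕ) (ψ : ℕ → ℝ) :
    linearCombination ℝ ψ (uniformWeight n) = (n : ℝ)⁻¹ * ∑ d ∈ Icc 1 n, ψ d := by
  simp [uniformWeight, mul_sum]

lemma IsProbWeight.of_linearCombination_one {w : ℕ →₀ ℝ} (hw : ∀ d, 0 ≤ w d)
    (hsum : linearCombination ℝ (fun _ => (1 : ℝ)) w = 1) : IsProbWeight w :=
  ⟨hw, by simpa [linearCombination_eq_sum] using hsum⟩

lemma isProbWeight_fejerWeight {n : ℕ} (hn : n ≠ 0) : IsProbWeight (fejerWeight n) := by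
  refine .of_linearCombination_one (fun d => ?_) ?_
  · simp only [fejerWeight, Finsupp.finsetSum_apply, Finsupp.single_apply]
    positivity
  · simp [linearCombination_fejerWeight, ← sq, hn]

lemma isProbWeight_uniformWeight {n : ℕ} (hn : n ≠ 0) : IsProbWeight (uniformWeight n) := by
  refine .of_linearCombination_one (fun d => ?_) ?_
  · simp only [uniformWeight, Finsupp.finsetSum_apply, Finsupp.single_apply]
    positivity
  · simp [linearCombination_uniformWeight, hn]

end Weights

section GowersAverages

open Finsupp (linearCombination)

variable {A : Type*} [CommCStarAlgebra A] (S : A →⋆ₐ[ℂ] A)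

/-- The multiplicative derivative `b · conj (S^d b)` of `b`. -/
def mulDeriv (d : ℕ) (b : A) : A := b * star ((S ^ d) b)

lemma norm_pow_apply_mul_star_le_one {b : A} (hb : ‖b‖ ≤ 1) (i j : ℕ) :
    ‖(S ^ i) b * star ((S ^ j) b)‖ ≤ 1 := by
  have hpow (d : ℕ) : ‖(S ^ d) b‖ ≤ 1 := (NonUnitalStarAlgHom.norm_apply_le (S ^ d) b).trans hb
  exact (norm_mul_le _ _).trans
    (mul_le_one₀ (hpow i) (norm_nonneg _) ((norm_star _).trans_le (hpow j)))

lemma norm_mulDeriv_le_one {b : A} (hb : ‖b‖ ≤ 1) (d : ℕ) : ‖mulDeriv S d b‖ ≤ 1 :=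
  norm_pow_apply_mul_star_le_one S hb 0 d

lemma pow_apply_pow_apply (i j : ℕ) (b : A) : (S ^ i) ((S ^ j) b) = (S ^ (i + j)) b :=
  DFunLike.congr_fun (pow_add S i j).symm b

lemma mulDeriv_mulDeriv_comm (d e : ℕ) (b : A) :
    mulDeriv S d (mulDeriv S e b) = mulDeriv S e (mulDeriv S d b) := by
  simp only [mulDeriv, map_mul, map_star, star_mul', star_star, pow_apply_pow_apply, add_comm d e]
  ring

lemma pow_apply_mulDeriv (i d : ℕ) (b : A) :
    (S ^ i) (mulDeriv S d b) = mulDeriv S d ((S ^ i) b) := by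
  simp only [mulDeriv, map_mul, map_star, pow_apply_pow_apply, add_comm]

lemma star_mulDeriv (d : ℕ) (b : A) : star (mulDeriv S d b) = mulDeriv S d (star b) := by
  simp only [mulDeriv, star_mul', map_star]

variable [PartialOrder A] (m : A →ₚ[ℂ] ℂ)

/-- The `s`-fold iterated average of `b` over Gowers cubes, with respect to the functional `m` and
with the shift in every direction distributed according to `w`. -/
noncomputable def gowersAverage (w : ℕ →₀ ℝ) : ℕ → A → ℝ
  | 0, b => (m b).re
  | s + 1, b => linearCombination ℝ (fun d => gowersAverage w s (mulDeriv S d b)) w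

variable {S m} {h k l v w : ℕ →₀ ℝ} {ε : ℝ} {b : A}

lemma linearCombination_gowersAverage_le (hv : IsProbWeight v)
    (hw : ∀ b : A, ‖b‖ ≤ 1 → linearCombination ℝ (fun d => (m (mulDeriv S d b)).re) w ≤ ε)
    (s : ℕ) (hb : ‖b‖ ≤ 1) :
    linearCombination ℝ (fun d => gowersAverage S m v s (mulDeriv S d b)) w ≤ ε := by
  induction s generalizing b with
  | zero => exact hw b hb
  | succ s ih =>
    simp only [gowersAverage]
    rw [linearCombination_comm, ← hv.linearCombination_const ε]
    refine hv.linearCombination_mono fun e => ?_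
    simpa only [mulDeriv_mulDeriv_comm S e] using ih (norm_mulDeriv_le_one S hb e)

lemma gowersAverage_le_add (hk : IsProbWeight k) (hl : IsProbWeight l)
    (hkl : ∀ b : A, ‖b‖ ≤ 1 → linearCombination ℝ (fun d => (m (mulDeriv S d b)).re) (k - l) ≤ ε)
    (s : ℕ) (hb : ‖b‖ ≤ 1) :
    gowersAverage S m k s b ≤ gowersAverage S m l s b + s * ε := by
  induction s generalizing b with
  | zero => simp [gowersAverage]
  | succ s ih =>
    have hswap := linearCombination_gowersAverage_le hk hkl s hb
    have hmono := hl.linearCombination_mono fun d =>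
      ih (norm_mulDeriv_le_one S hb d)
    rw [linearCombination_fun_add, hl.linearCombination_const] at hmono
    rw [map_sub] at hswap
    simp only [gowersAverage, Nat.cast_add_one]
    linarith

theorem two_pow_mul_gowersAverage_le (hh : IsProbWeight h) (hk : IsProbWeight k)
    (hl : IsProbWeight l)
    (hhl : ∀ b : A, ‖b‖ ≤ 1 → linearCombination ℝ (fun d => (m (mulDeriv S d b)).re) (h - l) ≤ ε)
    (hkhl : ∀ b : A, ‖b‖ ≤ 1 →
      linearCombination ℝ (fun d => (m (mulDeriv S d b)).re) ((2 : ℝ) • k - (h + l)) ≤ ε)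
    (s : ℕ) (hb : ‖b‖ ≤ 1) :
    2 ^ s * gowersAverage S m k s b ≤
      gowersAverage S m h s b + (2 ^ s - 1) * (gowersAverage S m l s b + s * ε) := by
  have hkl (b : A) (hb : ‖b‖ ≤ 1) :
      linearCombination ℝ (fun d => (m (mulDeriv S d b)).re) (k - l) ≤ ε := by
    have hhl := hhl b hb
    have hkhl := hkhl b hb
    simp only [map_sub, map_add, map_smul, smul_eq_mul] at hhl hkhl ⊢
    linarith
  induction s generalizing b with
  | zero => simp [gowersAverage]
  | succ s ih =>
    have havg := hh.linearCombination_mono fun d => ih (norm_mulDeriv_le_one S hb d)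
    have hl_of_h := linearCombination_gowersAverage_le hl hhl s hb
    have hk_step := linearCombination_gowersAverage_le hk hkhl s hb
    have hk_le := hl.linearCombination_mono fun d =>
      gowersAverage_le_add hk hl hkl s (norm_mulDeriv_le_one S hb d)
    simp only [linearCombination_fun_add, linearCombination_fun_const_mul, map_sub, map_add,
      map_smul, smul_eq_mul, hh.linearCombination_const, hl.linearCombination_const]
      at havg hl_of_h hk_step hk_le
    have hpow : (1 : ℝ) ≤ 2 ^ s := one_le_pow₀ one_le_two
    simp only [gowersAverage, Nat.cast_add_one, pow_succ]
    linear_combination havg + (2 ^ s - 1) * hl_of_h + 2 ^ s * (hk_step + hk_le)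

lemma gowersAverage_pow_apply (hS : ∀ a, m (S a) = m a) (s i : ℕ) (b : A) :
    gowersAverage S m w s ((S ^ i) b) = gowersAverage S m w s b := by
  induction s generalizing b with
  | zero =>
    induction i generalizing b with
    | zero => rfl
    | succ i ih => rw [← pow_apply_pow_apply, ih, gowersAverage, pow_one, hS, gowersAverage]
  | succ s ih => simp only [gowersAverage, ← pow_apply_mulDeriv, ih]

variable [StarOrderedRing A]

attribute [local instance] InnerProductSpace.complexToReal

lemma gowersAverage_star (s : ℕ) (b : A) :
    gowersAverage S m w s (star b) = gowersAverage S m w s b := by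
  induction s generalizing b with
  | zero => rw [gowersAverage, gowersAverage, map_star, Complex.star_def, Complex.conj_re]
  | succ s ih => simp only [gowersAverage, ← star_mulDeriv, ih]

lemma gowersAverage_pow_apply_mul_star (hS : ∀ a, m (S a) = m a) (s i j : ℕ) (b : A) :
    gowersAverage S m w s ((S ^ i) b * star ((S ^ j) b)) =
      gowersAverage S m w s (mulDeriv S (Nat.dist i j) b) := by
  wlog hij : i ≤ j generalizing i j
  · rw [← gowersAverage_star, star_mul', star_star, mul_comm, this j i (le_of_not_ge hij),
      Nat.dist_comm]
  obtain ⟨d, rfl⟩ := Nat.exists_eq_add_of_le hij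
  rw [Nat.dist_eq_sub_of_le hij, Nat.add_sub_cancel_left,
    ← gowersAverage_pow_apply hS s i (mulDeriv S d b), mulDeriv, map_mul, map_star,
    pow_apply_pow_apply]

lemma gowersAverage_fejerWeight_succ (hS : ∀ a, m (S a) = m a) (n s : ℕ) (b : A) :
    gowersAverage S m (fejerWeight n) (s + 1) b = ((n : ℝ) ^ 2)⁻¹ * ∑ i ∈ range n, ∑ j ∈ range n,
      gowersAverage S m (fejerWeight n) s ((S ^ i) b * star ((S ^ j) b)) := by
  simp only [gowersAverage, linearCombination_fejerWeight, gowersAverage_pow_apply_mul_star hS]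

variable (m) in
lemma re_map_mulDeriv (d : ℕ) (b : A) : (m (mulDeriv S d b)).re = (m (star b * (S ^ d) b)).re := by
  rw [← Complex.conj_re, ← Complex.star_def, ← map_star m, mulDeriv, star_mul', star_star]

/-- The isometry of the (pre-)GNS space of `m` induced by a star endomorphism preserving `m`. -/
noncomputable def gnsIsometry (hS : ∀ a, m (S a) = m a) : m.PreGNS →ₗᵢ[ℝ] m.PreGNS where
  toLinearMap := (m.toPreGNS.toLinearMap ∘ₗ S.toAlgHom.toLinearMap ∘ₗ
    m.ofPreGNS.toLinearMap).restrictScalars ℝ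
  norm_map' x := by
    simp only [PositiveLinearMap.preGNS_norm_def, LinearMap.coe_restrictScalars,
      LinearMap.coe_comp, Function.comp_apply, LinearEquiv.coe_coe,
      PositiveLinearMap.ofPreGNS_toPreGNS]
    congr 2
    rw [← hS (star (m.ofPreGNS x) * m.ofPreGNS x), map_mul S, map_star S]
    rfl

lemma gnsIsometry_iterate_toPreGNS (hS : ∀ a, m (S a) = m a) (d : ℕ) (b : A) :
    (gnsIsometry hS)^[d] (m.toPreGNS b) = m.toPreGNS ((S ^ d) b) := by
  induction d generalizing b with
  | zero => rfl
  | succ d ih =>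
    rw [Function.iterate_succ_apply, pow_succ]
    exact ih (S b)

lemma inner_gnsIsometry_iterate (hS : ∀ a, m (S a) = m a) (d : ℕ) (b : A) :
    ⟪m.toPreGNS b, (gnsIsometry hS)^[d] (m.toPreGNS b)⟫_ℝ = (m (mulDeriv S d b)).re := by
  rw [gnsIsometry_iterate_toPreGNS, re_map_mulDeriv, real_inner_eq_re_inner ℂ,
    PositiveLinearMap.preGNS_inner_def]
  rfl

lemma norm_toPreGNS_le_one (hm : m 1 = 1) (hb : ‖b‖ ≤ 1) : ‖m.toPreGNS b‖ ≤ 1 := by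
  have hone : ‖m.toPreGNS (1 : A)‖ = 1 := by
    simp [PositiveLinearMap.preGNS_norm_def, hm]
  calc ‖m.toPreGNS b‖ = ‖m.leftMulMapPreGNS b (m.toPreGNS 1)‖ := by simp
    _ ≤ ‖m.leftMulMapPreGNS b‖ * 1 := hone ▸ ContinuousLinearMap.le_opNorm _ _
    _ ≤ 1 := by
      rw [mul_one]
      exact (LinearMap.mkContinuous_norm_le _ (norm_nonneg b) _).trans hb

lemma linearCombination_fejerWeight_mulDeriv (hS : ∀ a, m (S a) = m a) (n : ℕ) (b : A) :
    linearCombination ℝ (fun d => (m (mulDeriv S d b)).re) (fejerWeight n) =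
      ‖isometryAverage (gnsIsometry hS) n (m.toPreGNS b)‖ ^ 2 := by
  simp only [linearCombination_fejerWeight, norm_isometryAverage_sq_eq, inner_gnsIsometry_iterate]

lemma linearCombination_uniformWeight_mulDeriv (hS : ∀ a, m (S a) = m a) (n : ℕ) (b : A) :
    linearCombination ℝ (fun d => (m (mulDeriv S d b)).re) (uniformWeight n) =
      ⟪m.toPreGNS b, gnsIsometry hS (isometryAverage (gnsIsometry hS) n (m.toPreGNS b))⟫_ℝ := by
  simp only [linearCombination_uniformWeight, inner_map_isometryAverage, inner_gnsIsometry_iterate]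

theorem two_pow_mul_gowersAverage_fejerWeight_le (hS : ∀ a, m (S a) = m a) (hm : m 1 = 1)
    {h k l : ℕ} (hh : h ≠ 0) (hk : k ≠ 0) (hl : l ≠ 0) (s : ℕ) (hb : ‖b‖ ≤ 1) :
    2 ^ s * gowersAverage S m (fejerWeight k) s b ≤ gowersAverage S m (uniformWeight h) s b +
      (2 ^ s - 1) * (gowersAverage S m (fejerWeight l) s b +
        s * (4 * l / h + 4 * (l + h + 1) / k)) := by
  refine two_pow_mul_gowersAverage_le (isProbWeight_uniformWeight hh) (isProbWeight_fejerWeight hk)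
    (isProbWeight_fejerWeight hl) (fun b hb => ?_) (fun b hb => ?_) s hb
  · have hle := inner_map_isometryAverage_le (gnsIsometry hS) (norm_toPreGNS_le_one hm hb) hl h
    have hpos : (0 : ℝ) ≤ 4 * (l + h + 1) / k := by positivity
    simp only [map_sub, linearCombination_uniformWeight_mulDeriv hS,
      linearCombination_fejerWeight_mulDeriv hS]
    linarith
  · have hle := two_mul_norm_isometryAverage_sq_le (gnsIsometry hS) (norm_toPreGNS_le_one hm hb)
      hl hh k
    simp only [map_sub, map_add, map_smul, smul_eq_mul, linearCombination_uniformWeight_mulDeriv hS,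
      linearCombination_fejerWeight_mulDeriv hS]
    linarith

lemma two_pow_mul_le_of_forall_le_gowersAverage_fejerWeight (hS : ∀ a, m (S a) = m a)
    (hm : m 1 = 1) {l s : ℕ} (hl : l ≠ 0) (hb : ‖b‖ ≤ 1) {c v : ℝ}
    (hc : ∀ k ≠ 0, c ≤ gowersAverage S m (fejerWeight k) s b)
    (hv : Tendsto (fun h => gowersAverage S m (uniformWeight h) s b) atTop (𝓝 v)) :
    2 ^ s * c ≤ v + (2 ^ s - 1) * gowersAverage S m (fejerWeight l) s b := by
  have herror : Tendsto (fun h : ℕ => 4 * (l : ℝ) / h + 4 * (l + h + 1) / (h ^ 2 : ℕ))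
      atTop (𝓝 0) := by
    have hinv : Tendsto (fun h : ℕ => (h : ℝ)⁻¹) atTop (𝓝 0) := tendsto_inv_atTop_nhds_zero_nat
    have := (hinv.const_mul (4 * l + 4 : ℝ)).add ((hinv.mul hinv).const_mul (4 * (l + 1) : ℝ))
    simp only [mul_zero, add_zero] at this
    refine this.congr fun h => ?_
    rcases eq_or_ne h 0 with rfl | hh
    · simp
    · push_cast
      field_simp
      ring
  have hlimit := hv.add (((herror.const_mul (s : ℝ)).const_add
    (gowersAverage S m (fejerWeight l) s b)).const_mul (2 ^ s - 1 : ℝ))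
  rw [mul_zero, add_zero] at hlimit
  refine ge_of_tendsto hlimit ?_
  filter_upwards [eventually_ne_atTop 0] with h hh
  have hsq : h ^ 2 ≠ 0 := pow_ne_zero 2 hh
  exact (mul_le_mul_of_nonneg_left (hc _ hsq) (by positivity)).trans
    (two_pow_mul_gowersAverage_fejerWeight_le hS hm hh hsq hl s hb)

theorem le_of_forall_le_gowersAverage_fejerWeight (hS : ∀ a, m (S a) = m a) (hm : m 1 = 1)
    {s : ℕ} (hb : ‖b‖ ≤ 1) {c v : ℝ}
    (hc : ∀ l ≠ 0, c ≤ gowersAverage S m (fejerWeight l) s b)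
    (hv : Tendsto (fun h => gowersAverage S m (uniformWeight h) s b) atTop (𝓝 v)) : c ≤ v := by
  set Q : ℕ → ℝ := fun l => gowersAverage S m (fejerWeight (l + 1)) s b
  have hQ : BddBelow (Set.range Q) := ⟨c, by rintro _ ⟨l, rfl⟩; exact hc _ l.succ_ne_zero⟩
  have hinf_le (k : ℕ) (hk : k ≠ 0) : ⨅ i, Q i ≤ gowersAverage S m (fejerWeight k) s b := by
    obtain ⟨l, rfl⟩ := Nat.exists_eq_succ_of_ne_zero hk
    exact ciInf_le hQ l
  have hlimit : 2 ^ s * ⨅ i, Q i ≤ v + (2 ^ s - 1) * ⨅ i, Q i := by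
    rw [Real.mul_iInf_of_nonneg (r := 2 ^ s - 1) (sub_nonneg.2 (one_le_pow₀ one_le_two)),
      ← sub_le_iff_le_add']
    exact le_ciInf fun l => sub_le_iff_le_add'.2
      (two_pow_mul_le_of_forall_le_gowersAverage_fejerWeight hS hm l.succ_ne_zero hb hinf_le hv)
  calc c ≤ ⨅ i, Q i := le_ciInf fun l => hc _ l.succ_ne_zero
    _ ≤ v := by linarith

end GowersAverages

section CesaroAverages

variable {I : ℕ → Finset ℕ} {f : ℕ → ℂ}

lemma cesaroAvg_add (I : ℕ → Finset ℕ) (f g : ℕ → ℂ) :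
    cesaroAvg I (f + g) = cesaroAvg I f + cesaroAvg I g := by
  ext N
  simp only [cesaroAvg, Pi.add_apply, sum_add_distrib, mul_add]

lemma cesaroAvg_smul (I : ℕ → Finset ℕ) (c : ℂ) (f : ℕ → ℂ) :
    cesaroAvg I (c • f) = c • cesaroAvg I f := by
  ext N
  simp only [cesaroAvg, Pi.smul_apply, smul_eq_mul, ← mul_sum, mul_left_comm]

lemma cesaroAvg_nonneg (I : ℕ → Finset ℕ) (hf : ∀ n, 0 ≤ f n) (N : ℕ) : 0 ≤ cesaroAvg I f N :=
  mul_nonneg (by positivity) (sum_nonneg fun n _ => hf n)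

lemma norm_cesaroAvg_le (I : ℕ → Finset ℕ) {C : ℝ} (hf : ∀ n, ‖f n‖ ≤ C) (N : ℕ) :
    ‖cesaroAvg I f N‖ ≤ C := by
  rw [cesaroAvg, norm_mul, norm_inv, Complex.norm_natCast]
  refine inv_mul_le_of_le_mul₀ (by positivity) ((norm_nonneg _).trans (hf 0)) ?_
  simpa only [sum_const, nsmul_eq_mul] using norm_sum_le_of_le (I N) fun n _ => hf n

lemma cesaroAvg_eq_birkhoffAverage {lo hi : ℕ → ℕ} (hI : ∀ N, I N = Icc (lo N) (hi N))
    (f : ℕ → ℂ) (N : ℕ) :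
    cesaroAvg I f N = birkhoffAverage ℝ Nat.succ f #(I N) (lo N) := by
  rw [cesaroAvg, hI, birkhoffAverage, birkhoffSum, ← Ico_add_one_right_eq_Icc,
    sum_Ico_eq_sum_range, Nat.card_Ico, Complex.real_smul]
  simp [Nat.succ_iterate]

theorem norm_cesaroAvg_sq_le {lo hi : ℕ → ℕ} (hI : ∀ N, I N = Icc (lo N) (hi N))
    (hf : ∀ n, ‖f n‖ ≤ 1) {N l : ℕ} (hN : #(I N) ≠ 0) (hl : l ≠ 0) :
    ‖cesaroAvg I f N‖ ^ 2 ≤ ((l : ℝ) ^ 2)⁻¹ * ∑ i ∈ range l, ∑ j ∈ range l,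
      (cesaroAvg I (fun n => f (n + i) * star (f (n + j))) N).re + 4 * l / #(I N) := by
  rw [cesaroAvg_eq_birkhoffAverage hI]
  refine (van_der_corput (fun i => hf _) hN hl).trans_eq ?_
  have hinner (i j : ℕ) :
      birkhoffAverage ℝ Nat.succ (fun n => ⟪f (Nat.succ^[j] n), f (Nat.succ^[i] n)⟫_ℝ) #(I N) (lo N)
        = (cesaroAvg I (fun n => f (n + i) * star (f (n + j))) N).re := by
    rw [cesaroAvg_eq_birkhoffAverage hI]
    simp only [Nat.succ_iterate, Complex.inner]
    exact (map_birkhoffAverage ℝ ℝ Complex.reLm Nat.succ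
      (fun n => f (n + i) * star (f (n + j))) #(I N) (lo N)).symm
  rw [sum_comm]
  simp only [hinner]

end CesaroAverages

section CesaroMean

attribute [local instance] CStarAlgebra.spectralOrder CStarAlgebra.spectralOrderedRing

lemma exists_tendsto_of_forall_norm_le {ι E : Type*} [SeminormedAddCommGroup E] [ProperSpace E]
    (U : Ultrafilter ι) {u : ι → E} {C : ℝ} (hu : ∀ i, ‖u i‖ ≤ C) :
    ∃ x, Tendsto u U (𝓝 x) := by
  obtain ⟨x, -, hx⟩ := (isCompact_closedBall (0 : E) C).ultrafilter_le_nhds' (U.map u)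
    (mem_map.2 (univ_mem' fun i => mem_closedBall_zero_iff.2 (hu i)))
  exact ⟨x, hx⟩

lemma tendsto_limUnder_cesaroAvg (I : ℕ → Finset ℕ) (U : Ultrafilter ℕ) (f : ℕ →ᵇ ℂ) :
    Tendsto (cesaroAvg I f) U (𝓝 (limUnder (U : Filter ℕ) (cesaroAvg I f))) :=
  tendsto_nhds_limUnder
    (exists_tendsto_of_forall_norm_le U (norm_cesaroAvg_le I f.norm_coe_le_norm))

/-- The mean of a bounded sequence along the intervals `I`: the limit of its Cesàro averages along
the ultrafilter `U`. -/
noncomputable def cesaroMean (I : ℕ → Finset ℕ) (U : Ultrafilter ℕ) : (ℕ →ᵇ ℂ) →ₚ[ℂ] ℂ :=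
  .mk₀
    { toFun f := limUnder (U : Filter ℕ) (cesaroAvg I f)
      map_add' f g := by
        refine ((tendsto_limUnder_cesaroAvg I U f).add
          (tendsto_limUnder_cesaroAvg I U g)).congr' ?_ |>.limUnder_eq
        exact .of_forall fun N => congrFun (cesaroAvg_add I f g).symm N
      map_smul' c f := by
        refine ((tendsto_limUnder_cesaroAvg I U f).const_smul c).congr' ?_ |>.limUnder_eq
        exact .of_forall fun N => congrFun (cesaroAvg_smul I c f).symm N }
    fun f hf => by
      obtain ⟨g, rfl⟩ := CStarAlgebra.nonneg_iff_eq_star_mul_self.1 hf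
      exact ge_of_tendsto' (tendsto_limUnder_cesaroAvg I U _)
        (cesaroAvg_nonneg I fun n => star_mul_self_nonneg (g n))

lemma tendsto_cesaroMean (I : ℕ → Finset ℕ) (U : Ultrafilter ℕ) (f : ℕ →ᵇ ℂ) :
    Tendsto (cesaroAvg I f) U (𝓝 (cesaroMean I U f)) :=
  tendsto_limUnder_cesaroAvg I U f

/-- The shift `f ↦ f (· + 1)` on bounded sequences. -/
noncomputable def shift : (ℕ →ᵇ ℂ) →⋆ₐ[ℂ] (ℕ →ᵇ ℂ) where
  toFun f := f.compContinuous ⟨Nat.succ, continuous_of_discreteTopology⟩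
  map_one' := rfl
  map_mul' _ _ := rfl
  map_zero' := rfl
  map_add' _ _ := rfl
  commutes' _ := rfl
  map_star' _ := rfl

lemma shift_pow_apply (i : ℕ) (f : ℕ →ᵇ ℂ) (n : ℕ) : (shift ^ i) f n = f (n + i) := by
  induction i generalizing n with
  | zero => rfl
  | succ i ih =>
    rw [add_comm i 1, ← pow_apply_pow_apply, pow_one]
    exact (ih (n + 1)).trans (congrArg f (by ring))

variable {I : ℕ → Finset ℕ} {U : Ultrafilter ℕ}

lemma cesaroMean_one (hcard : Tendsto (fun N => #(I N)) U atTop) : cesaroMean I U 1 = 1 := by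
  refine tendsto_nhds_unique (tendsto_cesaroMean I U 1) (tendsto_const_nhds.congr' ?_)
  filter_upwards [hcard.eventually_ne_atTop 0] with N hN
  simp [cesaroAvg, hN]

lemma cesaroMean_shift {lo hi : ℕ → ℕ} (hI : ∀ N, I N = Icc (lo N) (hi N))
    (hcard : Tendsto (fun N => #(I N)) U atTop) (f : ℕ →ᵇ ℂ) :
    cesaroMean I U (shift f) = cesaroMean I U f := by
  refine tendsto_nhds_unique (tendsto_cesaroMean I U (shift f)) ?_
  have hbound (N : ℕ) : ‖cesaroAvg I (shift f) N - cesaroAvg I f N‖ ≤ 2 * ‖f‖ / #(I N) := by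
    have hshift : birkhoffAverage ℝ Nat.succ (shift f) #(I N) (lo N) =
        birkhoffAverage ℝ Nat.succ f #(I N) (Nat.succ (lo N)) := by
      simp only [birkhoffAverage, birkhoffSum, ← Function.iterate_succ_apply,
        Function.iterate_succ_apply']
      rfl
    rw [cesaroAvg_eq_birkhoffAverage hI, cesaroAvg_eq_birkhoffAverage hI, hshift,
      birkhoffAverage_apply_sub_birkhoffAverage, norm_smul, norm_inv, Real.norm_natCast,
      inv_mul_eq_div]
    gcongr
    linarith [norm_sub_le (f (Nat.succ^[#(I N)] (lo N))) (f (lo N)), f.norm_coe_le_norm (lo N),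
      f.norm_coe_le_norm (Nat.succ^[#(I N)] (lo N))]
  have hzero : Tendsto (fun N => cesaroAvg I (shift f) N - cesaroAvg I f N) U (𝓝 0) :=
    squeeze_zero_norm hbound
      (tendsto_const_nhds.div_atTop (tendsto_natCast_atTop_atTop.comp hcard))
  simpa using hzero.add (tendsto_cesaroMean I U f)

end CesaroMean

section MeasurePreservingSystems

/-- Measurable functions bounded by `1`. -/
structure IsUnitBounded {X : Type*} [MeasurableSpace X] (f : X → ℂ) : Prop where
  measurable : Measurable f
  norm_le_one : ∀ x, ‖f x‖ ≤ 1

namespace IsUnitBounded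

variable {X : Type*} [MeasurableSpace X] {f g : X → ℂ}

lemma const_mul (hf : IsUnitBounded f) {c : ℂ} (hc : ‖c‖ ≤ 1) : IsUnitBounded fun x => c * f x where
  measurable := hf.measurable.const_mul c
  norm_le_one x := (norm_mul_le _ _).trans (mul_le_one₀ hc (norm_nonneg _) (hf.norm_le_one x))

lemma mul (hf : IsUnitBounded f) (hg : IsUnitBounded g) : IsUnitBounded fun x => f x * g x where
  measurable := hf.measurable.mul hg.measurable
  norm_le_one x := (norm_mul_le _ _).trans
    (mul_le_one₀ (hf.norm_le_one x) (norm_nonneg _) (hg.norm_le_one x))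

lemma star (hf : IsUnitBounded f) : IsUnitBounded fun x => star (f x) where
  measurable := continuous_star.measurable.comp hf.measurable
  norm_le_one x := (norm_star _).trans_le (hf.norm_le_one x)

lemma prod {ι : Type*} [Fintype ι] {f : ι → X → ℂ} (hf : ∀ i, IsUnitBounded (f i)) :
    IsUnitBounded fun x => ∏ i, f i x where
  measurable := univ.measurable_fun_prod fun i _ => (hf i).measurable
  norm_le_one x := (Finset.norm_prod_le _ _).trans
    (prod_le_one (fun _ _ => norm_nonneg _) fun i _ => (hf i).norm_le_one x)

lemma comp_measurable {Y : Type*} [MeasurableSpace Y] (hf : IsUnitBounded f) {φ : Y → X}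
    (hφ : Measurable φ) : IsUnitBounded (f ∘ φ) where
  measurable := hf.measurable.comp hφ
  norm_le_one y := hf.norm_le_one (φ y)

lemma integrable (hf : IsUnitBounded f) (μ : Measure X) [IsFiniteMeasure μ] : Integrable f μ :=
  .of_bound hf.measurable.aestronglyMeasurable 1 (.of_forall hf.norm_le_one)

lemma integrable_norm_sq (hf : IsUnitBounded f) {μ : Measure X} [IsFiniteMeasure μ] :
    Integrable (fun x => ‖f x‖ ^ 2) μ :=
  .of_bound (hf.measurable.norm.pow_const 2).aestronglyMeasurable 1
    (.of_forall fun x => by simpa using hf.norm_le_one x)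

lemma norm_integral_le_one (hf : IsUnitBounded f) (μ : Measure X) [IsProbabilityMeasure μ] :
    ‖∫ x, f x ∂μ‖ ≤ 1 := by
  simpa using norm_integral_le_of_norm_le_const (μ := μ) (.of_forall hf.norm_le_one)

lemma cesaroAvg {v : ℕ → X → ℂ} (hv : ∀ n, IsUnitBounded (v n)) (I : ℕ → Finset ℕ) (N : ℕ) :
    IsUnitBounded fun x => cesaroAvg I (fun n => v n x) N where
  measurable := (Finset.measurable_fun_sum _ fun n _ => (hv n).measurable).const_mul _
  norm_le_one x := norm_cesaroAvg_le I (fun n => (hv n).norm_le_one x) N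

end IsUnitBounded

variable {X : Type*} [MeasurableSpace X] {μ : Measure X} {I : ℕ → Finset ℕ}

lemma integral_cesaroAvg {v : ℕ → X → ℂ} (hv : ∀ n, Integrable (v n) μ) (N : ℕ) :
    ∫ x, cesaroAvg I (fun n => v n x) N ∂μ = cesaroAvg I (fun n => ∫ x, v n x ∂μ) N := by
  simp only [cesaroAvg]
  rw [integral_const_mul, integral_finsetSum _ fun n _ => hv n]

lemma norm_integral_mul_sq_le [IsProbabilityMeasure μ] {f g : X → ℂ} (hf : IsUnitBounded f)
    (hg : IsUnitBounded g) : ‖∫ x, f x * g x ∂μ‖ ^ 2 ≤ ∫ x, ‖g x‖ ^ 2 ∂μ := by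
  have hconvex : ConvexOn ℝ Set.univ fun z : ℂ => ‖z‖ ^ 2 :=
    convexOn_univ_norm.pow (fun _ _ => norm_nonneg _) 2
  have hfg : IsUnitBounded fun x => f x * g x := hf.mul hg
  refine (hconvex.map_integral_le (by fun_prop) isClosed_univ (.of_forall fun _ => Set.mem_univ _)
    (hfg.integrable μ) hfg.integrable_norm_sq).trans ?_
  refine integral_mono hfg.integrable_norm_sq hg.integrable_norm_sq fun x => ?_
  rw [norm_mul]
  gcongr
  exact mul_le_of_le_one_left (norm_nonneg _) (hf.norm_le_one x)

theorem norm_cesaroAvg_integral_mul_sq_le [IsProbabilityMeasure μ] {lo hi : ℕ → ℕ}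
    (hI : ∀ N, I N = Icc (lo N) (hi N)) {f : X → ℂ} (hf : IsUnitBounded f) {v : ℕ → X → ℂ}
    (hv : ∀ n, IsUnitBounded (v n)) {N l : ℕ} (hN : #(I N) ≠ 0) (hl : l ≠ 0) :
    ‖cesaroAvg I (fun n => ∫ x, f x * v n x ∂μ) N‖ ^ 2 ≤
      ((l : ℝ) ^ 2)⁻¹ * ∑ i ∈ range l, ∑ j ∈ range l,
        (cesaroAvg I (fun n => ∫ x, v (n + i) x * star (v (n + j) x) ∂μ) N).re
        + 4 * l / #(I N) := by
  have hprod (i j n : ℕ) : IsUnitBounded fun x => v (n + i) x * star (v (n + j) x) :=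
    (hv _).mul (hv _).star
  have hcorr (i j : ℕ) : Integrable
      (fun x => (cesaroAvg I (fun n => v (n + i) x * star (v (n + j) x)) N).re) μ :=
    ((IsUnitBounded.cesaroAvg (hprod i j) I N).integrable μ).re
  have hsum (i : ℕ) := integrable_finsetSum (range l) fun j _ => hcorr i j
  have hintegral (i j : ℕ) :
      ∫ x, (cesaroAvg I (fun n => v (n + i) x * star (v (n + j) x)) N).re ∂μ =
        (cesaroAvg I (fun n => ∫ x, v (n + i) x * star (v (n + j) x) ∂μ) N).re := by
    rw [← integral_cesaroAvg fun n => (hprod i j n).integrable μ]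
    exact integral_re ((IsUnitBounded.cesaroAvg (hprod i j) I N).integrable μ)
  have hpull : cesaroAvg I (fun n => ∫ x, f x * v n x ∂μ) N =
      ∫ x, f x * cesaroAvg I (fun n => v n x) N ∂μ := by
    rw [← integral_cesaroAvg fun n => (hf.mul (hv n)).integrable μ]
    simp only [cesaroAvg, mul_sum, mul_left_comm]
  calc ‖cesaroAvg I (fun n => ∫ x, f x * v n x ∂μ) N‖ ^ 2
      ≤ ∫ x, ‖cesaroAvg I (fun n => v n x) N‖ ^ 2 ∂μ :=
        hpull ▸ norm_integral_mul_sq_le hf (.cesaroAvg hv I N)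
    _ ≤ ∫ x, (((l : ℝ) ^ 2)⁻¹ * ∑ i ∈ range l, ∑ j ∈ range l,
          (cesaroAvg I (fun n => v (n + i) x * star (v (n + j) x)) N).re + 4 * l / #(I N)) ∂μ :=
        integral_mono (IsUnitBounded.cesaroAvg hv I N).integrable_norm_sq
          (((integrable_finsetSum _ fun i _ => hsum i).const_mul _).add (integrable_const _))
          fun x => norm_cesaroAvg_sq_le hI (fun n => (hv n).norm_le_one x) hN hl
    _ = _ := by
        rw [integral_add ((integrable_finsetSum _ fun i _ => hsum i).const_mul _)
            (integrable_const _), integral_const_mul, integral_finsetSum _ fun i _ => hsum i]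
        simp only [integral_finsetSum _ fun j _ => hcorr _ j, hintegral, integral_const,
          probReal_univ, one_smul]

variable {T : Equiv.Perm X}

lemma measurePreserving_zpow (hT : MeasurePreserving T μ μ) (hT' : Measurable T.symm) :
    ∀ n : ℤ, MeasurePreserving (T ^ n : Equiv.Perm X) μ μ
  | .ofNat n => by
    simpa only [Int.ofNat_eq_natCast, zpow_natCast, Equiv.Perm.coe_pow] using hT.iterate n
  | .negSucc n => by
    have hinv : MeasurePreserving (T⁻¹ : Equiv.Perm X) μ μ := hT.symm ⟨T, hT.measurable, hT'⟩
    simpa only [zpow_negSucc, ← inv_pow, Equiv.Perm.coe_pow] using hinv.iterate (n + 1)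

/-- The product `∏ i, F i (T^(k i * n) x)` of the functions `F i` along the orbit of `x`. -/
def orbitProd {X : Type*} (T : Equiv.Perm X) {r : ℕ} (k : Fin r → ℤ) (F : Fin r → X → ℂ) (n : ℕ)
    (x : X) : ℂ :=
  ∏ i, F i ((T ^ (k i * n)) x)

/-- The functions `T^(k l * i) F_l · conj (T^(k l * j) F_l)` by which correlating two shifts of
`orbitProd T k F` replaces `F`. -/
def pairedFunctions {X : Type*} (T : Equiv.Perm X) {r : ℕ} (k : Fin r → ℤ) (F : Fin r → X → ℂ)
    (i j : ℕ) : Fin r → X → ℂ :=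
  fun l x => F l ((T ^ (k l * i)) x) * star (F l ((T ^ (k l * j)) x))

variable {r : ℕ}

lemma orbitProd_mul_star_orbitProd {X : Type*} (T : Equiv.Perm X) (k : Fin r → ℤ)
    (F : Fin r → X → ℂ) (n i j : ℕ) (x : X) :
    orbitProd T k F (n + i) x * star (orbitProd T k F (n + j) x) =
      orbitProd T k (pairedFunctions T k F i j) n x := by
  have hshift (l : Fin r) (d : ℕ) :
      (T ^ (k l * (n + d : ℕ))) x = (T ^ (k l * d)) ((T ^ (k l * n)) x) := by
    rw [← Equiv.Perm.mul_apply, ← zpow_add]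
    congr 2
    push_cast
    ring
  simp only [orbitProd, pairedFunctions, star_prod, ← prod_mul_distrib, hshift]

lemma IsUnitBounded.orbitProd (hT : MeasurePreserving T μ μ) (hT' : Measurable T.symm)
    {F : Fin r → X → ℂ} (hF : ∀ l, IsUnitBounded (F l)) (k : Fin r → ℤ) (n : ℕ) :
    IsUnitBounded (orbitProd T k F n) :=
  .prod fun l => (hF l).comp_measurable (measurePreserving_zpow hT hT' _).measurable

lemma IsUnitBounded.pairedFunctions (hT : MeasurePreserving T μ μ) (hT' : Measurable T.symm)
    {F : Fin r → X → ℂ} (hF : ∀ l, IsUnitBounded (F l)) (k : Fin r → ℤ) (i j : ℕ) (l : Fin r) :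
    IsUnitBounded (pairedFunctions T k F i j l) :=
  have hcomp (d : ℕ) := (hF l).comp_measurable (measurePreserving_zpow hT hT' (k l * d)).measurable
  (hcomp i).mul (hcomp j).star

/-- The exponents `k₁ - k₀, …, k_r - k₀` left after the change of variables `x ↦ T^(-k₀ n) x`. -/
def relativeExponents (k : Fin (r + 1) → ℤ) : Fin r → ℤ := fun l => k l.succ - k 0

lemma orbitProd_succ {X : Type*} (T : Equiv.Perm X) (k : Fin (r + 1) → ℤ) (F : Fin (r + 1) → X → ℂ)
    (n : ℕ) (x : X) :
    orbitProd T k F n x = F 0 ((T ^ (k 0 * n)) x) *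
      orbitProd T (relativeExponents k) (Fin.tail F) n ((T ^ (k 0 * n)) x) := by
  have hshift (l : Fin r) :
      (T ^ (k l.succ * n)) x = (T ^ (relativeExponents k l * n)) ((T ^ (k 0 * n)) x) := by
    rw [← Equiv.Perm.mul_apply, ← zpow_add, relativeExponents]
    congr 2
    ring
  simp only [orbitProd, Fin.prod_univ_succ, Fin.tail, hshift]

lemma integral_orbitProd_succ (hT : MeasurePreserving T μ μ) (hT' : Measurable T.symm)
    {F : Fin (r + 1) → X → ℂ} (hF : ∀ l, IsUnitBounded (F l)) (k : Fin (r + 1) → ℤ) (n : ℕ) :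
    ∫ x, orbitProd T k F n x ∂μ =
      ∫ x, F 0 x * orbitProd T (relativeExponents k) (Fin.tail F) n x ∂μ := by
  have hpres := measurePreserving_zpow hT hT' (k 0 * n)
  have hprod : IsUnitBounded fun x =>
      F 0 x * orbitProd T (relativeExponents k) (Fin.tail F) n x :=
    (hF 0).mul (.orbitProd hT hT' (fun l => hF l.succ) _ n)
  have hmap := integral_map hpres.aemeasurable hprod.measurable.aestronglyMeasurable
  rw [hpres.map_eq] at hmap
  simpa only [orbitProd_succ T k F] using hmap.symm

theorem norm_cesaroAvg_mul_orbitProd_sq_le [IsProbabilityMeasure μ]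
    (hT : MeasurePreserving T μ μ) (hT' : Measurable T.symm) {lo hi : ℕ → ℕ}
    (hI : ∀ N, I N = Icc (lo N) (hi N)) {b : ℕ → ℂ} (hb : ∀ n, ‖b n‖ ≤ 1)
    {F : Fin (r + 1) → X → ℂ} (hF : ∀ l, IsUnitBounded (F l)) (k : Fin (r + 1) → ℤ)
    {N l : ℕ} (hN : #(I N) ≠ 0) (hl : l ≠ 0) :
    ‖cesaroAvg I (fun n => b n * ∫ x, orbitProd T k F n x ∂μ) N‖ ^ 2 ≤
      ((l : ℝ) ^ 2)⁻¹ * ∑ i ∈ range l, ∑ j ∈ range l,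
        (cesaroAvg I (fun n => b (n + i) * star (b (n + j)) *
          ∫ x, orbitProd T (relativeExponents k)
            (pairedFunctions T (relativeExponents k) (Fin.tail F) i j) n x ∂μ) N).re
        + 4 * l / #(I N) := by
  have hv (n : ℕ) : IsUnitBounded fun x =>
      b n * orbitProd T (relativeExponents k) (Fin.tail F) n x :=
    (IsUnitBounded.orbitProd hT hT' (fun q => hF q.succ) _ n).const_mul (hb n)
  have hvdc := norm_cesaroAvg_integral_mul_sq_le (μ := μ) hI (hF 0) hv hN hl
  simp only [mul_left_comm (F 0 _), star_mul', mul_mul_mul_comm, orbitProd_mul_star_orbitProd,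
    integral_const_mul] at hvdc
  simpa only [integral_orbitProd_succ hT hT' hF] using hvdc

end MeasurePreservingSystems

section CorrelationAverages

attribute [local instance] CStarAlgebra.spectralOrder CStarAlgebra.spectralOrderedRing

variable {X : ℕ → Type*} [∀ N, MeasurableSpace (X N)] {μ : ∀ N, Measure (X N)}
  {T : ∀ N, Equiv.Perm (X N)} {I : ℕ → Finset ℕ} {r : ℕ}

/-- The Cesàro averages, weighted by `b`, of the multiple correlations
`∫ x, ∏ i, F i (T^(k i * n) x)`; the average over `I N` is taken in the `N`th system. -/
noncomputable def correlationAvg (I : ℕ → Finset ℕ) (μ : ∀ N, Measure (X N))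
    (T : ∀ N, Equiv.Perm (X N)) (k : Fin r → ℤ) (F : ∀ N, Fin r → X N → ℂ) (b : ℕ → ℂ) (N : ℕ) :
    ℂ :=
  cesaroAvg I (fun n => b n * ∫ x, orbitProd (T N) k (F N) n x ∂μ N) N

variable [∀ N, IsProbabilityMeasure (μ N)]

lemma norm_correlationAvg_le_one (hT : ∀ N, MeasurePreserving (T N) (μ N) (μ N))
    (hT' : ∀ N, Measurable (T N).symm) {b : ℕ → ℂ} (hb : ∀ n, ‖b n‖ ≤ 1)
    {F : ∀ N, Fin r → X N → ℂ} (hF : ∀ N l, IsUnitBounded (F N l)) (k : Fin r → ℤ) (N : ℕ) :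
    ‖correlationAvg I μ T k F b N‖ ≤ 1 := by
  refine norm_cesaroAvg_le I (fun n => ?_) N
  have hint : ‖∫ x, orbitProd (T N) k (F N) n x ∂μ N‖ ≤ 1 :=
    (IsUnitBounded.orbitProd (hT N) (hT' N) (hF N) k n).norm_integral_le_one (μ N)
  exact (norm_mul_le _ _).trans (mul_le_one₀ (hb n) (norm_nonneg _) hint)

lemma correlationAvg_zero (k : Fin 0 → ℤ) (F : ∀ N, Fin 0 → X N → ℂ) (b : ℕ → ℂ) :
    correlationAvg I μ T k F b = cesaroAvg I b := by
  ext N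
  simp [correlationAvg, orbitProd]

variable {lo hi : ℕ → ℕ} {U : Ultrafilter ℕ} {b : ℕ →ᵇ ℂ} {w : ℂ} {l : ℕ}

theorem norm_sq_le_of_tendsto_correlationAvg (hI : ∀ N, I N = Icc (lo N) (hi N))
    (hcard : Tendsto (fun N => #(I N)) U atTop) (hT : ∀ N, MeasurePreserving (T N) (μ N) (μ N))
    (hT' : ∀ N, Measurable (T N).symm) (hb : ‖b‖ ≤ 1) {F : ∀ N, Fin (r + 1) → X N → ℂ}
    (hF : ∀ N q, IsUnitBounded (F N q)) {k : Fin (r + 1) → ℤ} (hl : l ≠ 0) {z : ℕ → ℕ → ℂ}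
    (hw : Tendsto (correlationAvg I μ T k F b) U (𝓝 w))
    (hz : ∀ i j, Tendsto (correlationAvg I μ T (relativeExponents k)
      (fun N => pairedFunctions (T N) (relativeExponents k) (Fin.tail (F N)) i j)
      ((shift ^ i) b * star ((shift ^ j) b) : ℕ →ᵇ ℂ)) U (𝓝 (z i j))) :
    ‖w‖ ^ 2 ≤ ((l : ℝ) ^ 2)⁻¹ * ∑ i ∈ range l, ∑ j ∈ range l, (z i j).re := by
  have herror : Tendsto (fun N => 4 * (l : ℝ) / #(I N)) U (𝓝 0) :=
    tendsto_const_nhds.div_atTop (tendsto_natCast_atTop_atTop.comp hcard)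
  have hre (i j : ℕ) := (Complex.continuous_re.tendsto (z i j)).comp (hz i j)
  have hlimit := ((tendsto_finsetSum (range l) fun i _ => tendsto_finsetSum (range l) fun j _ =>
    hre i j).const_mul ((l : ℝ) ^ 2)⁻¹).add herror
  rw [add_zero] at hlimit
  refine le_of_tendsto_of_tendsto (hw.norm.pow 2) hlimit ?_
  filter_upwards [hcard.eventually_ne_atTop 0] with N hN
  have hstep := norm_cesaroAvg_mul_orbitProd_sq_le (hT N) (hT' N) hI
    (fun n => (b.norm_coe_le_norm n).trans hb) (hF N) k hN hl
  simpa only [correlationAvg, Function.comp_apply, BoundedContinuousFunction.mul_apply,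
    BoundedContinuousFunction.star_apply, shift_pow_apply] using hstep

lemma mean_pow_two_pow_le (n r : ℕ) (z : ℕ → ℕ → ℝ) :
    (((n : ℝ) ^ 2)⁻¹ * ∑ i ∈ range n, ∑ j ∈ range n, z i j) ^ 2 ^ r ≤
      ((n : ℝ) ^ 2)⁻¹ * ∑ i ∈ range n, ∑ j ∈ range n, z i j ^ 2 ^ r := by
  rcases eq_or_ne n 0 with rfl | hn
  · simp
  rcases eq_or_ne r 0 with rfl | hr
  · simp
  have heven : Even (2 ^ r) := even_two.pow_of_ne_zero hr
  have hweight : ∑ _ ∈ range n ×ˢ range n, ((n : ℝ) ^ 2)⁻¹ = 1 := by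
    simp [← sq, hn]
  have := Real.pow_arith_mean_le_arith_mean_pow_of_even (range n ×ˢ range n)
    (fun _ => ((n : ℝ) ^ 2)⁻¹) (fun p => z p.1 p.2) (fun _ _ => by positivity) hweight heven
  simpa only [← mul_sum, sum_product] using this

lemma norm_pow_le_gowersAverage_succ (hI : ∀ N, I N = Icc (lo N) (hi N))
    (hcard : Tendsto (fun N => #(I N)) U atTop) (hT : ∀ N, MeasurePreserving (T N) (μ N) (μ N))
    (hT' : ∀ N, Measurable (T N).symm) (hb : ‖b‖ ≤ 1) {F : ∀ N, Fin (r + 1) → X N → ℂ}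
    (hF : ∀ N q, IsUnitBounded (F N q)) {k : Fin (r + 1) → ℤ} (hl : l ≠ 0)
    (hw : Tendsto (correlationAvg I μ T k F b) U (𝓝 w))
    (hre : ∀ i j z, Tendsto (correlationAvg I μ T (relativeExponents k)
      (fun N => pairedFunctions (T N) (relativeExponents k) (Fin.tail (F N)) i j)
      ((shift ^ i) b * star ((shift ^ j) b) : ℕ →ᵇ ℂ)) U (𝓝 z) →
      z.re ^ 2 ^ r ≤ gowersAverage shift (cesaroMean I U) (fejerWeight l) r
        ((shift ^ i) b * star ((shift ^ j) b))) :
    ‖w‖ ^ 2 ^ (r + 1) ≤ gowersAverage shift (cesaroMean I U) (fejerWeight l) (r + 1) b := by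
  have hlimit (i j : ℕ) := exists_tendsto_of_forall_norm_le U <|
    norm_correlationAvg_le_one (I := I) hT hT'
      (fun n => (BoundedContinuousFunction.norm_coe_le_norm _ n).trans
        (norm_pow_apply_mul_star_le_one shift hb i j))
      (fun N => IsUnitBounded.pairedFunctions (hT N) (hT' N) (fun q => hF N (Fin.succ q))
        (relativeExponents k) i j) (relativeExponents k)
  choose z hz using hlimit
  calc ‖w‖ ^ 2 ^ (r + 1) = (‖w‖ ^ 2) ^ 2 ^ r := by rw [← pow_mul, pow_succ']
    _ ≤ (((l : ℝ) ^ 2)⁻¹ * ∑ i ∈ range l, ∑ j ∈ range l, (z i j).re) ^ 2 ^ r := by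
      gcongr
      exact norm_sq_le_of_tendsto_correlationAvg hI hcard hT hT' hb hF hl hw hz
    _ ≤ ((l : ℝ) ^ 2)⁻¹ * ∑ i ∈ range l, ∑ j ∈ range l, (z i j).re ^ 2 ^ r :=
      mean_pow_two_pow_le l r _
    _ ≤ ((l : ℝ) ^ 2)⁻¹ * ∑ i ∈ range l, ∑ j ∈ range l,
          gowersAverage shift (cesaroMean I U) (fejerWeight l) r
            ((shift ^ i) b * star ((shift ^ j) b)) := by
      gcongr with i _ j _
      exact hre i j _ (hz i j)
    _ = _ := (gowersAverage_fejerWeight_succ (cesaroMean_shift hI hcard) l r b).symm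

theorem re_pow_le_gowersAverage (hI : ∀ N, I N = Icc (lo N) (hi N))
    (hcard : Tendsto (fun N => #(I N)) U atTop) (hT : ∀ N, MeasurePreserving (T N) (μ N) (μ N))
    (hT' : ∀ N, Measurable (T N).symm) (hb : ‖b‖ ≤ 1) {F : ∀ N, Fin r → X N → ℂ}
    (hF : ∀ N q, IsUnitBounded (F N q)) {k : Fin r → ℤ} (hl : l ≠ 0)
    (hw : Tendsto (correlationAvg I μ T k F b) U (𝓝 w)) :
    w.re ^ 2 ^ r ≤ gowersAverage shift (cesaroMean I U) (fejerWeight l) r b := by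
  induction r generalizing b w with
  | zero =>
    rw [correlationAvg_zero] at hw
    rw [tendsto_nhds_unique hw (tendsto_cesaroMean I U b), pow_zero, pow_one, gowersAverage]
  | succ r ih =>
    have heven : Even (2 ^ (r + 1)) := even_two.pow_of_ne_zero r.succ_ne_zero
    rw [← heven.pow_abs]
    refine (pow_le_pow_left₀ (abs_nonneg _) (Complex.abs_re_le_norm w) _).trans ?_
    exact norm_pow_le_gowersAverage_succ hI hcard hT hT' hb hF hl hw fun i j _ hz =>
      ih (norm_pow_apply_mul_star_le_one shift hb i j)
        (fun N => .pairedFunctions (hT N) (hT' N) (fun q => hF N (Fin.succ q)) _ i j) hz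

theorem norm_pow_le_gowersAverage (hI : ∀ N, I N = Icc (lo N) (hi N))
    (hcard : Tendsto (fun N => #(I N)) U atTop) (hT : ∀ N, MeasurePreserving (T N) (μ N) (μ N))
    (hT' : ∀ N, Measurable (T N).symm) (hb : ‖b‖ ≤ 1) (hr : r ≠ 0) {F : ∀ N, Fin r → X N → ℂ}
    (hF : ∀ N q, IsUnitBounded (F N q)) {k : Fin r → ℤ} (hl : l ≠ 0)
    (hw : Tendsto (correlationAvg I μ T k F b) U (𝓝 w)) :
    ‖w‖ ^ 2 ^ r ≤ gowersAverage shift (cesaroMean I U) (fejerWeight l) r b := by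
  obtain ⟨r, rfl⟩ := Nat.exists_eq_succ_of_ne_zero hr
  exact norm_pow_le_gowersAverage_succ hI hcard hT hT' hb hF hl hw fun i j _ hz =>
    re_pow_le_gowersAverage hI hcard hT hT' (norm_pow_apply_mul_star_le_one shift hb i j)
      (fun N => .pairedFunctions (hT N) (hT' N) (fun q => hF N (Fin.succ q)) _ i j) hl hz

end CorrelationAverages

section CubeProducts

attribute [local instance] CStarAlgebra.spectralOrder CStarAlgebra.spectralOrderedRing

variable {s : ℕ}

lemma epsDot_cons (e : Bool) (ε : Fin s → Bool) (d : ℕ) (h : Fin s → ℕ) :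
    epsDot (Fin.cons e ε : Fin (s + 1) → Bool) (Fin.cons d h : Fin (s + 1) → ℕ) =
      (if e then d else 0) + epsDot ε h := by
  simp [epsDot, Fin.sum_univ_succ]

lemma card_filter_cons (e : Bool) (ε : Fin s → Bool) :
    #{j | (Fin.cons e ε : Fin (s + 1) → Bool) j = true} =
      (if e then 1 else 0) + #{j | ε j = true} := by
  rw [card_filter, card_filter, Fin.sum_univ_succ]
  simp only [Fin.cons_zero, Fin.cons_succ]

lemma cubeProd_cons (b : ℕ →ᵇ ℂ) (d : ℕ) (h : Fin s → ℕ) :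
    cubeProd b (Fin.cons d h : Fin (s + 1) → ℕ) =
      cubeProd (mulDeriv shift d b : ℕ →ᵇ ℂ) h := by
  ext n
  simp only [cubeProd]
  rw [← (Fin.consEquiv fun _ : Fin (s + 1) => Bool).prod_comp, Fintype.prod_prod_type,
    Fintype.prod_bool, mul_comm, ← prod_mul_distrib]
  refine prod_congr rfl fun ε _ => ?_
  have hcons (e : Bool) : Fin.consEquiv (fun _ => Bool) (e, ε) = Fin.cons e ε := rfl
  simp only [hcons, epsDot_cons, card_filter_cons, mulDeriv,
    BoundedContinuousFunction.mul_apply, BoundedContinuousFunction.star_apply, shift_pow_apply]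
  have hindex : n + (d + epsDot ε h) = n + epsDot ε h + d := by ring
  rcases Nat.mod_two_eq_zero_or_one #{j | ε j = true} with hparity | hparity <;>
    simp [Nat.add_mod, hparity, hindex]

lemma sum_piFinset_const_succ {α M : Type*} [AddCommMonoid M] (t : Finset α)
    (f : (Fin (s + 1) → α) → M) :
    ∑ h ∈ Fintype.piFinset (fun _ => t), f h =
      ∑ d ∈ t, ∑ h ∈ Fintype.piFinset (fun _ => t), f (Fin.cons d h) := by
  have hmap := filter_piFinset_eq_map_consEquiv (fun _ : Fin (s + 1) => t) fun _ => True
  simp only [filter_true] at hmap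
  rw [hmap, sum_map, sum_product]
  rfl

theorem gowersAverage_uniformWeight_eq {I : ℕ → Finset ℕ} {U : Ultrafilter ℕ} {b : ℕ →ᵇ ℂ}
    {c : (Fin s → ℕ) → ℂ} (hc : ∀ h, Tendsto (cesaroAvg I (cubeProd b h)) U (𝓝 (c h))) (n : ℕ) :
    gowersAverage shift (cesaroMean I U) (uniformWeight n) s b =
      (((n : ℂ) ^ s)⁻¹ * ∑ h ∈ Fintype.piFinset (fun _ => Icc 1 n), c h).re := by
  have hre (s : ℕ) (z : ℂ) : (((n : ℂ) ^ s)⁻¹ * z).re = ((n : ℝ) ^ s)⁻¹ * z.re := by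
    rw [← Complex.re_ofReal_mul]
    push_cast
    rfl
  induction s generalizing b with
  | zero =>
    have hcube (h : Fin 0 → ℕ) : cubeProd b h = b := by
      ext
      simp [cubeProd, epsDot]
    have hmean (h : Fin 0 → ℕ) : cesaroMean I U b = c h :=
      tendsto_nhds_unique (tendsto_cesaroMean I U b) (hcube h ▸ hc h)
    rw [gowersAverage, Fintype.piFinset_of_isEmpty, Fintype.sum_unique, ← hmean, pow_zero, inv_one,
      one_mul]
  | succ s ih =>
    have hderiv (d : ℕ) := ih (b := mulDeriv shift d b) (c := fun h => c (Fin.cons d h))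
      fun h => by simpa only [cubeProd_cons] using hc (Fin.cons d h)
    rw [gowersAverage, linearCombination_uniformWeight, sum_piFinset_const_succ, hre,
      Complex.re_sum]
    simp only [hderiv, hre, ← mul_sum, pow_succ', mul_inv, mul_assoc]

end CubeProducts

section UniformityEstimate

variable {X : ℕ → Type*} [∀ N, MeasurableSpace (X N)] {μ : ∀ N, Measure (X N)}
  [∀ N, IsProbabilityMeasure (μ N)] {T : ∀ N, Equiv.Perm (X N)} {I : ℕ → Finset ℕ} {s : ℕ}

theorem norm_le_of_tendsto_correlationAvg {lo hi : ℕ → ℕ} {U : Ultrafilter ℕ}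
    (hI : ∀ N, I N = Icc (lo N) (hi N)) (hcard : Tendsto (fun N => #(I N)) U atTop)
    (hT : ∀ N, MeasurePreserving (T N) (μ N) (μ N)) (hT' : ∀ N, Measurable (T N).symm)
    {a : ℕ → ℂ} (ha : ∀ n, ‖a n‖ ≤ 1) (hs : s ≠ 0) {F : ∀ N, Fin s → X N → ℂ}
    (hF : ∀ N q, IsUnitBounded (F N q)) {k : Fin s → ℤ} {u : ℝ} (hu : 0 ≤ u)
    {c : (Fin s → ℕ) → ℂ} (hc : ∀ h, Tendsto (cesaroAvg I (cubeProd a h)) U (𝓝 (c h)))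
    (hlim : Tendsto (fun n : ℕ => ((n : ℂ) ^ s)⁻¹ *
      ∑ h ∈ Fintype.piFinset (fun _ => Icc 1 n), c h) atTop (𝓝 ((u : ℂ) ^ 2 ^ s)))
    {w : ℂ} (hw : Tendsto (correlationAvg I μ T k F a) U (𝓝 w)) : ‖w‖ ≤ u := by
  let _ := CStarAlgebra.spectralOrder (ℕ →ᵇ ℂ)
  have _ := CStarAlgebra.spectralOrderedRing (ℕ →ᵇ ℂ)
  let b : ℕ →ᵇ ℂ := .ofNormedAddCommGroupDiscrete a 1 ha
  have hb : ‖b‖ ≤ 1 := (BoundedContinuousFunction.norm_le zero_le_one).2 ha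
  have hre := (Complex.continuous_re.tendsto _).comp hlim
  rw [← Complex.ofReal_pow, Complex.ofReal_re] at hre
  have huniform : Tendsto (fun n => gowersAverage shift (cesaroMean I U) (uniformWeight n) s b)
      atTop (𝓝 (u ^ 2 ^ s)) :=
    hre.congr fun n => (gowersAverage_uniformWeight_eq (b := b) hc n).symm
  have hpow : ‖w‖ ^ 2 ^ s ≤ u ^ 2 ^ s :=
    le_of_forall_le_gowersAverage_fejerWeight (cesaroMean_shift hI hcard)
      (cesaroMean_one hcard) hb
      (fun l hl => norm_pow_le_gowersAverage hI hcard hT hT' hb hs hF hl hw) huniform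
  exact le_of_pow_le_pow_left₀ (by positivity) hu hpow

lemma limsup_norm_le_of_forall_ultrafilter {ι E : Type*} [SeminormedAddCommGroup E]
    [ProperSpace E] {f : Filter ι} [f.NeBot] {v : ι → E} {C u : ℝ} (hv : ∀ i, ‖v i‖ ≤ C)
    (h : ∀ (U : Ultrafilter ι) (w : E), ↑U ≤ f → Tendsto v U (𝓝 w) → ‖w‖ ≤ u) :
    limsup (fun i => ‖v i‖) f ≤ u := by
  by_contra! hlt
  obtain ⟨r, hur, hr⟩ := exists_between hlt
  have hfreq : ∃ᶠ i in f, r < ‖v i‖ := frequently_lt_of_lt_limsup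
    (isBoundedUnder_of ⟨0, fun i => norm_nonneg (v i)⟩).isCoboundedUnder_le hr
  have : (f ⊓ 𝓟 {i | r < ‖v i‖}).NeBot := frequently_mem_iff_neBot.1 hfreq
  obtain ⟨U, hU⟩ := Ultrafilter.exists_le (f ⊓ 𝓟 {i | r < ‖v i‖})
  obtain ⟨hUf, hUr⟩ := le_inf_iff.1 hU
  obtain ⟨w, hw⟩ := exists_tendsto_of_forall_norm_le U hv
  have hlarge : ∀ᶠ i in U, r < ‖v i‖ := le_principal_iff.1 hUr
  have hrw : r ≤ ‖w‖ := ge_of_tendsto hw.norm (hlarge.mono fun _ => le_of_lt)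
  exact (hur.trans_le hrw).not_ge (h U w hUf hw)

end UniformityEstimate

end AntiUniformity

open AntiUniformity in
theorem anti_uniformity_estimate_general {lo hi : ℕ → ℕ} {I : ℕ → Finset ℕ}
    (hI : ∀ N, I N = Icc (lo N) (hi N)) (hIcard : Tendsto (fun N => #(I N)) atTop atTop)
    {a : ℕ → ℂ} (ha : ∀ n, ‖a n‖ ≤ 1) {s : ℕ} (hs : s ≠ 0) {X : ℕ → Type*}
    [∀ N, MeasurableSpace (X N)] {μ : ∀ N, Measure (X N)} [∀ N, IsProbabilityMeasure (μ N)]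
    {T : ∀ N, Equiv.Perm (X N)} (hT : ∀ N, MeasurePreserving (T N) (μ N) (μ N))
    (hTmeas : ∀ N, Measurable (T N).symm) {F : ∀ N, Fin s → X N → ℂ}
    (hFmeas : ∀ N i, Measurable (F N i)) (hFbd : ∀ N i x, ‖F N i x‖ ≤ 1) (k : Fin s → ℤ)
    {u : ℝ} (hu : 0 ≤ u) {c : (Fin s → ℕ) → ℂ}
    (hc : ∀ h, Tendsto (cesaroAvg I (cubeProd a h)) atTop (𝓝 (c h)))
    (hlim : Tendsto (fun H : ℕ => ((H : ℂ) ^ s)⁻¹ *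
      ∑ h ∈ Fintype.piFinset (fun _ => Icc 1 H), c h) atTop (𝓝 ((u : ℂ) ^ 2 ^ s))) :
    limsup (fun N => ‖cesaroAvg I
      (fun n => a n * ∫ x, ∏ i, F N i ((T N ^ (k i * (n : ℤ))) x) ∂μ N) N‖) atTop ≤ u := by
  have hF (N : ℕ) (i : Fin s) : IsUnitBounded (F N i) := ⟨hFmeas N i, hFbd N i⟩
  exact limsup_norm_le_of_forall_ultrafilter (norm_correlationAvg_le_one hT hTmeas ha hF k)
    fun U w hU hw => norm_le_of_tendsto_correlationAvg hI (hIcard.mono_left hU) hT hTmeas ha hs hF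
      hu (fun h => (hc h).mono_left hU) hlim hw

/-- Anti-uniformity estimate (Section 5.4, proof of Lemma 5.2 / Proposition 5.9): if `a`
is bounded by `1` and admits correlations for Cesàro averages on intervals `I` with
`|I_N| → ∞`, if `(X_N, μ_N, T_N)` are probability measure-preserving systems (with `T_N`
invertible), `F_{0,N},…,F_{s-1,N}` measurable functions bounded by `1`, and
`k₀ = 0, k₁,…,k_{s-1} ∈ ℤ`, then
`limsup_N |𝔼_{n∈I_N} a(n) ∫ F_{0,N} ⋅ T_N^{k₁n}F_{1,N} ⋯ T_N^{k_{s-1}n}F_{s-1,N} dμ_N|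
  ≤ 4 ‖a‖_{U^s(I)}`, where `u = ‖a‖_{U^s(I)}` is characterized by
`u^{2^s} = lim_H 𝔼_{h∈[H]^s} (lim_N 𝔼_{n∈I_N} ∏_ε C^{|ε|} a(n+ε·h))`. -/
theorem anti_uniformity_estimate
    (lo hi : ℕ → ℕ) (I : ℕ → Finset ℕ)
    (hI : ∀ N, I N = Finset.Icc (lo N) (hi N))
    (hIcard : Tendsto (fun N => (I N).card) atTop atTop)
    (a : ℕ → ℂ) (ha : ∀ n, ‖a n‖ ≤ 1)
    (s : ℕ) (hs : 1 ≤ s)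
    (hcorr : ∀ (k : ℕ) (sh : Fin k → ℕ) (cj : Fin k → Bool),
      ∃ L : ℂ, Tendsto (cesaroAvg I fun m => ∏ j,
        if cj j then (starRingEnd ℂ) (a (m + sh j)) else a (m + sh j)) atTop (𝓝 L))
    (X : ℕ → Type) (mX : ∀ N, MeasurableSpace (X N))
    (μ : ∀ N, Measure (X N)) (hμ : ∀ N, IsProbabilityMeasure (μ N))
    (T : ∀ N, Equiv.Perm (X N))
    (hT : ∀ N, MeasurePreserving (T N) (μ N) (μ N))
    (hTmeas : ∀ N, Measurable ((T N).symm : X N → X N))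
    (F : ∀ N, Fin s → X N → ℂ)
    (hFmeas : ∀ N i, Measurable (F N i))
    (hFbd : ∀ N i x, ‖F N i x‖ ≤ 1)
    (k : Fin s → ℤ) (hk0 : k ⟨0, hs⟩ = 0)
    (u : ℝ) (hu : 0 ≤ u)
    (c : (Fin s → ℕ) → ℂ)
    (hc : ∀ h : Fin s → ℕ, Tendsto (cesaroAvg I (cubeProd a h)) atTop (𝓝 (c h)))
    (hlim : Tendsto (fun H : ℕ => ((H : ℂ) ^ s)⁻¹ *
        ∑ h ∈ Fintype.piFinset (fun _ : Fin s => Finset.Icc 1 H), c h) atTop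
        (𝓝 ((u : ℂ) ^ (2 ^ s)))) :
    limsup (fun N : ℕ =>
      ‖((I N).card : ℂ)⁻¹ * ∑ n ∈ I N, a n *
          ∫ x, (∏ i, F N i (((T N) ^ (k i * (n : ℤ))) x)) ∂(μ N)‖) atTop ≤ 4 * u :=
  (anti_uniformity_estimate_general hI hIcard ha (Nat.one_le_iff_ne_zero.1 hs) hT hTmeas hFmeas
    hFbd k hu hc hlim).trans (by linarith)
end
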